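/- Let d ≥ 1, T > 0 and A, B, τ > 0, and let f = e^{−ψ}, F, (ρ, u, R) satisfy all the hypotheses of the relative entropy identity: ψ ∈ C^∞([0,T] × ℝ^{2d}) with all partial derivatives of order ≥ 1 polynomially bounded, sup_{t} ∫∫ (1+|x|+|ξ|)^N f < ∞ for all N, F ∈ C^1 with |F|, |∇_ξ·F| polynomially bounded, f solving A ∂_t f + B ξ·∇_x f + ∇_ξ·(F f) = (1/τ) ∇_ξ·(∇_ξ f + ξ f) pointwise, and ρ ∈ C^1((0,T)×ℝ^d;(0,∞)), u, R ∈ C^1 with |log ρ|, |∇ log ρ|, |u|, |∇u|, |∂_t u|, |R| polynomially bounded in |x| uniformly in t, solving A ∂_t ρ + B ∇·(ρ u) = 0 and A ∂_t(ρ u) + B ∇·(ρ u⊗u) + B ∇ρ = ρ R pointwise. Assume additionally L := sup_{t,x} |∇u(t,x)| < ∞. Then for every t ∈ (0,T): (d/dt) ∫∫ f log(f/M_{ρ,u}) dx dξ + (1/(2τA)) ∫∫ (1/f)|∇_ξ f + (ξ − u_f) f|² dx dξ ≤ (B/A) L ∫ ρ_f |u_f − u|² dx + (B²τ/(2A)) L²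 ∫∫ (1+|ξ|²) f dx dξ − (1/(Aτ)) ∫ ρ_f u_f·(u_f − u) dx − (1/A) ∫∫ (∇_ξ·F) f dx dξ − (1/A) ∫∫ f (u−ξ)·(F − R) dx dξ. -/

import Mathlib

open MeasureTheory Real
open scoped RealInnerProductSpace

/-- The local Maxwellian `M_{ρ,u}(ξ) = ρ (2π)^{-d/2} exp(-|ξ-u|²/2)`. -/
noncomputable def maxwellian (d : ℕ) (ρ : ℝ) (u ξ : EuclideanSpace ℝ (Fin d)) : ℝ :=
  ρ * (2 * π) ^ (-(d : ℝ) / 2) * Real.exp (-‖ξ - u‖ ^ 2 / 2)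

/-- Divergence of a vector field on Euclidean space. -/
noncomputable def ediv {d : ℕ}
    (G : EuclideanSpace ℝ (Fin d) → EuclideanSpace ℝ (Fin d))
    (ξ : EuclideanSpace ℝ (Fin d)) : ℝ :=
  ∑ i, fderiv ℝ G ξ (EuclideanSpace.single i 1) i

section RelEnt
variable {d : ℕ}
local notation "𝔼" => EuclideanSpace ℝ (Fin d)

/-- The trace of a linear map, in coordinates. -/
noncomputable def etr (S : EuclideanSpace ℝ (Fin d) →L[ℝ] EuclideanSpace ℝ (Fin d)) : ℝ :=
  ∑ i, S (EuclideanSpace.single i 1) i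

lemma ediv_eq_etr (G : 𝔼 → 𝔼) (ξ : 𝔼) : ediv G ξ = etr (fderiv ℝ G ξ) := rfl

lemma etr_add (S S' : 𝔼 →L[ℝ] 𝔼) : etr (S + S') = etr S + etr S' := by
  simp [etr, Finset.sum_add_distrib]

lemma etr_smul (c : ℝ) (S : 𝔼 →L[ℝ] 𝔼) : etr (c • S) = c * etr S := by
  simp [etr, Finset.mul_sum]

lemma sum_single (v : 𝔼) : ∑ i, v i • (EuclideanSpace.single i (1:ℝ) : 𝔼) = v := by
  ext j
  simp [Finset.sum_apply, Pi.single_apply]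

lemma etr_smulRight (l : 𝔼 →L[ℝ] ℝ) (v : 𝔼) : etr (l.smulRight v) = l v := by
  conv_rhs => rw [← sum_single v]
  simp [etr, mul_comm]

lemma continuous_etr : Continuous (etr : (𝔼 →L[ℝ] 𝔼) → ℝ) := by
  unfold etr
  refine continuous_finset_sum _ fun i _ => ?_
  have h1 : Continuous fun S : 𝔼 →L[ℝ] 𝔼 => S (EuclideanSpace.single i 1) := by fun_prop
  exact (EuclideanSpace.proj (𝕜 := ℝ) i).continuous.comp h1

lemma abs_etr_le (S : 𝔼 →L[ℝ] 𝔼) : |etr S| ≤ d * ‖S‖ := by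
  unfold etr
  refine (Finset.abs_sum_le_sum_abs _ _).trans ?_
  have : ∀ i ∈ Finset.univ, |S (EuclideanSpace.single i (1:ℝ)) i| ≤ ‖S‖ := by
    intro i _
    have h1 := PiLp.norm_apply_le (S (EuclideanSpace.single i (1:ℝ))) i
    have h2 := S.le_opNorm (EuclideanSpace.single i (1:ℝ))
    simp only [PiLp.norm_single, norm_one, mul_one] at h2
    exact h1.trans h2
  refine (Finset.sum_le_sum this).trans ?_
  simp

lemma ediv_add {G H : 𝔼 → 𝔼} {ξ : 𝔼} (hG : DifferentiableAt ℝ G ξ) (hH : DifferentiableAt ℝ H ξ) :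
    ediv (fun ζ => G ζ + H ζ) ξ = ediv G ξ + ediv H ξ := by
  rw [ediv_eq_etr, ediv_eq_etr, ediv_eq_etr, fderiv_fun_add hG hH, etr_add]

lemma ediv_smul {a : 𝔼 → ℝ} {G : 𝔼 → 𝔼} {ξ : 𝔼} (ha : DifferentiableAt ℝ a ξ)
    (hG : DifferentiableAt ℝ G ξ) :
    ediv (fun ζ => a ζ • G ζ) ξ = fderiv ℝ a ξ (G ξ) + a ξ * ediv G ξ := by
  rw [ediv_eq_etr, ediv_eq_etr, fderiv_fun_smul ha hG, etr_add, etr_smul, etr_smulRight]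
  ring

lemma ediv_const (v ξ : 𝔼) : ediv (fun _ => v) ξ = 0 := by simp [ediv]

lemma ediv_id (ξ : 𝔼) : ediv (fun ζ => ζ) ξ = d := by simp [ediv]

lemma ediv_clm (S : 𝔼 →L[ℝ] 𝔼) (v ξ : 𝔼) : ediv (fun ζ => S (ζ - v)) ξ = etr S := by
  rw [ediv_eq_etr]
  congr 1
  have : HasFDerivAt (fun ζ => S (ζ - v)) (S.comp (ContinuousLinearMap.id ℝ 𝔼)) ξ :=
    S.hasFDerivAt.comp ξ ((hasFDerivAt_id ξ).sub_const v)
  simpa using this.fderiv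

lemma continuous_ediv {G : 𝔼 → 𝔼} (hG : ContDiff ℝ 1 G) : Continuous (ediv G) :=
  continuous_etr.comp (hG.continuous_fderiv one_ne_zero)

lemma integral_ediv_compact {G : 𝔼 → 𝔼} (hG : ContDiff ℝ 1 G) (hc : HasCompactSupport G) :
    ∫ x, ediv G x = 0 := by
  have hGi : ∀ i : Fin d, ContDiff ℝ 1 (fun x => G x i) := fun i => by fun_prop
  have hci : ∀ i : Fin d, HasCompactSupport (fun x => G x i) := fun i =>
    hc.comp_left (g := fun v : 𝔼 => v i) rfl
  have hder : ∀ i : Fin d, ∀ x, fderiv ℝ G x (EuclideanSpace.single i 1) i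
      = fderiv ℝ (fun x => G x i) x (EuclideanSpace.single i 1) := by
    intro i x
    have h1 : HasFDerivAt (fun x => G x i)
        ((EuclideanSpace.proj (𝕜 := ℝ) i).comp (fderiv ℝ G x)) x :=
      (EuclideanSpace.proj (𝕜 := ℝ) i).hasFDerivAt.comp x
        ((hG.differentiable one_ne_zero) x).hasFDerivAt
    rw [h1.fderiv]; rfl
  have hcont : ∀ i : Fin d, Continuous fun x => fderiv ℝ (fun x => G x i) x
      (EuclideanSpace.single i 1) := fun i =>
    ((hGi i).continuous_fderiv one_ne_zero).clm_apply continuous_const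
  have hint : ∀ i : Fin d, Integrable fun x => fderiv ℝ (fun x => G x i) x
      (EuclideanSpace.single i 1) := fun i =>
    (hcont i).integrable_of_hasCompactSupport ((hci i).fderiv_apply ℝ _)
  unfold ediv
  simp_rw [hder]
  rw [integral_finset_sum _ fun i _ => hint i]
  refine Finset.sum_eq_zero fun i _ => ?_
  have := integral_mul_fderiv_eq_neg_fderiv_mul_of_integrable (μ := (volume : Measure 𝔼))
    (f := fun _ : 𝔼 => (1:ℝ)) (g := fun x => G x i) (v := EuclideanSpace.single i 1)
    (by simp) (by simpa using hint i)
    (by simpa using (hGi i).continuous.integrable_of_hasCompactSupport (hci i))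
    (fun x _ => by fun_prop) (fun x _ => (hGi i).differentiable one_ne_zero x)
  simpa using this

/-- Divergence theorem on the whole space for integrable fields with integrable divergence. -/
lemma integral_ediv {G : 𝔼 → 𝔼} (hG : ContDiff ℝ 1 G) (hi : Integrable G)
    (hd : Integrable (ediv G)) : ∫ x, ediv G x = 0 := by
  let b : ContDiffBump (0 : 𝔼) := ⟨1, 2, one_pos, one_lt_two⟩
  have hb : ContDiff ℝ 1 b := b.contDiff
  have hbc : HasCompactSupport b := b.hasCompactSupport
  obtain ⟨C, hC⟩ : ∃ C, ∀ x, ‖fderiv ℝ b x‖ ≤ C :=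
    (hb.continuous_fderiv one_ne_zero).bounded_above_of_compact_support (hbc.fderiv ℝ)
  have hC0 : 0 ≤ C := (norm_nonneg _).trans (hC 0)
  let a : ℕ → ℝ := fun n => ((n:ℝ) + 1)⁻¹
  have ha0 : ∀ n, 0 < a n := fun n => by positivity
  have ha1 : ∀ n, a n ≤ 1 := fun n => inv_le_one_of_one_le₀ (by simp)
  let χ : ℕ → 𝔼 → ℝ := fun n x => b (a n • x)
  have hχ : ∀ n, ContDiff ℝ 1 (χ n) := fun n => hb.comp (contDiff_const_smul _)
  have hχd : ∀ n x, fderiv ℝ (χ n) x = a n • fderiv ℝ b (a n • x) := by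
    intro n x
    have h1 : HasFDerivAt (fun x : 𝔼 => a n • x) (a n • ContinuousLinearMap.id ℝ 𝔼) x :=
      (hasFDerivAt_id x).const_smul (a n)
    have h2 := ((hb.differentiable one_ne_zero) (a n • x)).hasFDerivAt.comp x h1
    have h3 := h2.fderiv
    change fderiv ℝ (χ n) x = _ at h3
    rw [h3]; ext v; simp
  have hχc : ∀ n, HasCompactSupport (χ n) := fun n =>
    hbc.comp_smul (ha0 n).ne'
  have key : ∀ n x, ediv (fun x => χ n x • G x) x
      = a n * fderiv ℝ b (a n • x) (G x) + χ n x * ediv G x := by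
    intro n x
    rw [ediv_smul ((hχ n).differentiable one_ne_zero x) (hG.differentiable one_ne_zero x), hχd]
    simp
  have hz : ∀ n, ∫ x, (a n * fderiv ℝ b (a n • x) (G x) + χ n x * ediv G x) = 0 := by
    intro n
    rw [← integral_ediv_compact ((hχ n).smul hG) (hχc n).smul_right]
    exact integral_congr_ae (Filter.Eventually.of_forall fun x => (key n x).symm)
  have hlim : Filter.Tendsto
      (fun n => ∫ x, (a n * fderiv ℝ b (a n • x) (G x) + χ n x * ediv G x))
      Filter.atTop (nhds (∫ x, ediv G x)) := by
    refine tendsto_integral_of_dominated_convergence (fun x => C * ‖G x‖ + ‖ediv G x‖) ?_ ?_ ?_ ?_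
    · intro n
      refine Continuous.aestronglyMeasurable ?_
      have c1 : Continuous fun x => fderiv ℝ b (a n • x) (G x) :=
        ((hb.continuous_fderiv one_ne_zero).comp (continuous_const_smul _)).clm_apply hG.continuous
      exact (continuous_const.mul c1).add ((hχ n).continuous.mul (continuous_ediv hG))
    · exact (hi.norm.const_mul C).add hd.norm
    · intro n
      refine Filter.Eventually.of_forall fun x => ?_
      refine (norm_add_le _ _).trans (add_le_add ?_ ?_)
      · rw [norm_mul, Real.norm_of_nonneg (ha0 n).le]
        calc a n * ‖fderiv ℝ b (a n • x) (G x)‖ ≤ 1 * (C * ‖G x‖) := by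
              refine mul_le_mul (ha1 n) ?_ (norm_nonneg _) zero_le_one
              exact (ContinuousLinearMap.le_opNorm _ _).trans
                (mul_le_mul_of_nonneg_right (hC _) (norm_nonneg _))
          _ = _ := one_mul _
      · rw [norm_mul]
        have : ‖χ n x‖ ≤ 1 := by
          rw [Real.norm_of_nonneg b.nonneg]; exact b.le_one
        exact mul_le_of_le_one_left (norm_nonneg _) this
    · refine Filter.Eventually.of_forall fun x => ?_
      have ha : Filter.Tendsto a Filter.atTop (nhds 0) := by
        simpa [a] using tendsto_one_div_add_atTop_nhds_zero_nat (𝕜 := ℝ)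
      have hax : Filter.Tendsto (fun n => a n • x) Filter.atTop (nhds (0:𝔼)) := by
        simpa using ha.smul_const x
      have h1 : Filter.Tendsto (fun n => fderiv ℝ b (a n • x) (G x)) Filter.atTop
          (nhds (fderiv ℝ b 0 (G x))) :=
        (((hb.continuous_fderiv one_ne_zero).clm_apply continuous_const).tendsto 0).comp hax
      have h2 : Filter.Tendsto (fun n => χ n x) Filter.atTop (nhds (b 0)) :=
        (hb.continuous.tendsto 0).comp hax
      have hb0 : b 0 = 1 := b.one_of_mem_closedBall (by simp [b])
      have := (ha.mul h1).add (h2.mul_const (ediv G x))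
      simpa [hb0] using this
  simp_rw [hz] at hlim
  exact (tendsto_nhds_unique hlim tendsto_const_nhds)

end RelEnt

section RelEnt2

/-- `X` is integrable with integral `c`. -/
def HI {α : Type*} [MeasurableSpace α] (μ : Measure α) (X : α → ℝ) (c : ℝ) : Prop :=
  Integrable X μ ∧ ∫ a, X a ∂μ = c

namespace HI
variable {α : Type*} [MeasurableSpace α] {μ : Measure α} {X Y : α → ℝ} {a b : ℝ}

lemma of (h : Integrable X μ) : HI μ X (∫ a, X a ∂μ) := ⟨h, rfl⟩

lemma add (hX : HI μ X a) (hY : HI μ Y b) : HI μ (fun z => X z + Y z) (a + b) :=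
  ⟨hX.1.add hY.1, by rw [integral_add hX.1 hY.1, hX.2, hY.2]⟩

lemma sub (hX : HI μ X a) (hY : HI μ Y b) : HI μ (fun z => X z - Y z) (a - b) :=
  ⟨hX.1.sub hY.1, by rw [integral_sub hX.1 hY.1, hX.2, hY.2]⟩

lemma cmul (c : ℝ) (hX : HI μ X a) : HI μ (fun z => c * X z) (c * a) :=
  ⟨hX.1.const_mul c, by rw [integral_const_mul, hX.2]⟩

lemma mulc (c : ℝ) (hX : HI μ X a) : HI μ (fun z => X z * c) (a * c) :=
  ⟨hX.1.mul_const c, by rw [integral_mul_const, hX.2]⟩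

lemma congr (hX : HI μ X a) (h : ∀ z, Y z = X z) (hab : b = a) : HI μ Y b := by
  have : Y = X := funext h
  rw [this, hab]; exact hX

lemma mono (hX : HI μ X a) (hY : HI μ Y b) (h : ∀ z, X z ≤ Y z) : a ≤ b := by
  rw [← hX.2, ← hY.2]; exact integral_mono hX.1 hY.1 h

end HI

variable {d : ℕ}
local notation "𝔼" => EuclideanSpace ℝ (Fin d)

lemma continuous_grad {h : 𝔼 → ℝ} (hh : ContDiff ℝ 1 h) : Continuous (gradient h) := by
  unfold gradient
  exact (InnerProductSpace.toDual ℝ 𝔼).symm.continuous.comp (hh.continuous_fderiv one_ne_zero)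

set_option maxHeartbeats 1000000 in
/-- Fibrewise estimates. -/
lemma fiber_lemma {h : 𝔼 → ℝ} (hpos : ∀ ξ, 0 < h ξ) (hh : ContDiff ℝ 1 h)
    (i0 : Integrable h) (i2 : Integrable fun ξ => ‖ξ‖ ^ 2 * h ξ)
    (ig : Integrable fun ξ => (h ξ)⁻¹ * ‖gradient h ξ‖ ^ 2)
    (u v : 𝔼) (S : 𝔼 →L[ℝ] 𝔼) (B τ L : ℝ) (hB : 0 < B) (hτ : 0 < τ) (hS : ‖S‖ ≤ L)
    (hv : v = (∫ ξ, h ξ)⁻¹ • ∫ ξ, h ξ • ξ) :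
    (∫ ξ, h ξ) * ‖v - u‖ ^ 2 ≤ ∫ ξ, h ξ * ‖ξ - u‖ ^ 2 ∧
    Integrable (fun ξ => (h ξ)⁻¹ * ‖gradient h ξ + h ξ • (ξ - v)‖ ^ 2) ∧
    (∫ ξ, (h ξ)⁻¹ * ⟪gradient h ξ + h ξ • ξ, gradient h ξ + h ξ • (ξ - u)⟫
      = (∫ ξ, (h ξ)⁻¹ * ‖gradient h ξ + h ξ • (ξ - v)‖ ^ 2) + (∫ ξ, h ξ) * ⟪v, v - u⟫) ∧
    B * (∫ ξ, h ξ * (etr S - ⟪ξ - u, S (ξ - u)⟫)) ≤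
      B * L * ((∫ ξ, h ξ) * ‖v - u‖ ^ 2)
      + 1 / (2 * τ) * (∫ ξ, (h ξ)⁻¹ * ‖gradient h ξ + h ξ • (ξ - v)‖ ^ 2)
      + B ^ 2 * τ / 2 * L ^ 2 * (∫ ξ, (1 + ‖ξ‖ ^ 2) * h ξ) := by
  have hL : 0 ≤ L := (norm_nonneg _).trans hS
  have hc := hh.continuous
  have gc := continuous_grad hh
  have hρ : 0 < ∫ ξ, h ξ := by
    rw [integral_pos_iff_support_of_nonneg (fun ξ => (hpos ξ).le) i0]
    have : Function.support h = Set.univ := by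
      ext ξ; simp [(hpos ξ).ne']
    rw [this]; exact Measure.measure_univ_pos.2 (NeZero.ne _)
  -- vector integrability
  have i1 : Integrable fun ξ => h ξ • ξ := by
    refine Integrable.mono' (i0.add i2) (hc.smul continuous_id).aestronglyMeasurable ?_
    refine Filter.Eventually.of_forall fun ξ => ?_
    rw [norm_smul, Real.norm_of_nonneg (hpos ξ).le, Pi.add_apply]
    nlinarith [hpos ξ, sq_nonneg (‖ξ‖ - 1), norm_nonneg ξ, mul_nonneg (hpos ξ).le (sq_nonneg (‖ξ‖ - 1)), mul_nonneg (hpos ξ).le (sq_nonneg (‖ξ‖))]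
  have igr : Integrable fun ξ => gradient h ξ := by
    refine Integrable.mono' (i0.add ig) gc.aestronglyMeasurable ?_
    refine Filter.Eventually.of_forall fun ξ => ?_
    rw [Pi.add_apply]
    have h0 := hpos ξ
    set n := ‖gradient h ξ‖
    have : 0 ≤ (h ξ)⁻¹ * (n - h ξ) ^ 2 := by positivity
    have e : (h ξ)⁻¹ * (n - h ξ) ^ 2 = (h ξ)⁻¹ * n ^ 2 - 2 * n + h ξ := by
      field_simp; ring
    have : 0 ≤ n := norm_nonneg _
    linarith
  have igx : Integrable fun ξ => ⟪gradient h ξ, S ξ⟫ := by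
    refine Integrable.mono' ((ig.add i2).const_mul L)
      (gc.inner S.continuous).aestronglyMeasurable ?_
    refine Filter.Eventually.of_forall fun ξ => ?_
    rw [Pi.add_apply]
    have h0 := hpos ξ
    have h1 : ‖⟪gradient h ξ, S ξ⟫‖ ≤ ‖gradient h ξ‖ * (L * ‖ξ‖) :=
      (norm_inner_le_norm _ _).trans (mul_le_mul_of_nonneg_left (S.le_of_opNorm_le hS ξ)
        (norm_nonneg _))
    set n := ‖gradient h ξ‖
    have e0 : 0 ≤ (h ξ)⁻¹ * (n - h ξ * ‖ξ‖) ^ 2 := by positivity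
    have e : (h ξ)⁻¹ * (n - h ξ * ‖ξ‖) ^ 2 = (h ξ)⁻¹ * n ^ 2 - 2 * (n * ‖ξ‖) + ‖ξ‖ ^ 2 * h ξ := by
      field_simp; ring
    have e1 : 0 ≤ n * ‖ξ‖ := by positivity
    calc _ ≤ _ := h1
      _ = L * (n * ‖ξ‖) := by ring
      _ ≤ _ := mul_le_mul_of_nonneg_left (by linarith) hL
  have igx' : Integrable fun ξ => ⟪gradient h ξ, ξ⟫ := by
    refine Integrable.mono' (ig.add i2) (gc.inner continuous_id).aestronglyMeasurable ?_
    refine Filter.Eventually.of_forall fun ξ => ?_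
    rw [Pi.add_apply]
    have h0 := hpos ξ
    have h1 : ‖⟪gradient h ξ, ξ⟫‖ ≤ ‖gradient h ξ‖ * ‖ξ‖ := norm_inner_le_norm _ _
    set n := ‖gradient h ξ‖
    have e0 : 0 ≤ (h ξ)⁻¹ * (n - h ξ * ‖ξ‖) ^ 2 := by positivity
    have e : (h ξ)⁻¹ * (n - h ξ * ‖ξ‖) ^ 2 = (h ξ)⁻¹ * n ^ 2 - 2 * (n * ‖ξ‖) + ‖ξ‖ ^ 2 * h ξ := by
      field_simp; ring
    have e1 : 0 ≤ n * ‖ξ‖ := by positivity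
    linarith
  -- zero-integral quantities
  have H0 : HI volume h (∫ ξ, h ξ) := HI.of i0
  have Z1 : ∀ a : 𝔼, HI volume (fun ξ => h ξ * ⟪ξ - v, a⟫) 0 := by
    intro a
    have k1 : HI volume (fun ξ => ⟪a, h ξ • ξ⟫) ⟪a, ∫ ξ, h ξ • ξ⟫ :=
      ⟨i1.const_inner a, integral_inner i1 a⟩
    refine (k1.sub (H0.mulc ⟪a, v⟫)).congr (fun ξ => ?_) ?_
    · rw [inner_smul_right, inner_sub_left, real_inner_comm a ξ, real_inner_comm a v]; ring
    · have : (∫ ξ, h ξ • ξ) = (∫ ξ, h ξ) • v := by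
        rw [hv, smul_smul, mul_inv_cancel₀ hρ.ne', one_smul]
      rw [this, inner_smul_right]; ring
  have Z2 : ∀ a : 𝔼, HI volume (fun ξ => ⟪gradient h ξ, a⟫) 0 := by
    intro a
    have e : ∀ ξ, ⟪gradient h ξ, a⟫ = ediv (fun ζ => h ζ • a) ξ := by
      intro ξ
      rw [ediv_smul (hh.differentiable one_ne_zero ξ) (differentiableAt_const _), ediv_const,
        inner_gradient_left]; simp
    have ii : Integrable fun ξ => ⟪gradient h ξ, a⟫ := igr.inner_const a
    refine ⟨ii, ?_⟩
    simp_rw [e] at ii ⊢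
    exact integral_ediv (hh.smul contDiff_const) (i0.smul_const a) ii
  have Z3 : HI volume (fun ξ => ⟪gradient h ξ, S (ξ - v)⟫ + h ξ * etr S) 0 := by
    have e : ∀ ξ, ⟪gradient h ξ, S (ξ - v)⟫ + h ξ * etr S
        = ediv (fun ζ => h ζ • S (ζ - v)) ξ := by
      intro ξ
      rw [ediv_smul (hh.differentiable one_ne_zero ξ) (by fun_prop), ediv_clm,
        inner_gradient_left]
    have ii : Integrable fun ξ => ⟪gradient h ξ, S (ξ - v)⟫ + h ξ * etr S := by
      refine Integrable.add ?_ (i0.mul_const _)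
      have : ∀ ξ, ⟪gradient h ξ, S (ξ - v)⟫ = ⟪gradient h ξ, S ξ⟫ - ⟪gradient h ξ, S v⟫ := by
        intro ξ; rw [map_sub, inner_sub_right]
      simp_rw [this]
      exact igx.sub (Z2 _).1
    refine ⟨ii, ?_⟩
    simp_rw [e] at ii ⊢
    refine integral_ediv (hh.smul (by fun_prop)) ?_ ii
    have i3 : Integrable fun ξ => S (h ξ • ξ - h ξ • v) :=
      S.integrable_comp (i1.sub (i0.smul_const v))
    refine i3.congr (Filter.Eventually.of_forall fun ξ => ?_)
    simp only [← smul_sub, map_smul]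
  have H2v : HI volume (fun ξ => h ξ * ‖ξ - v‖ ^ 2)
      ((∫ ξ, ‖ξ‖ ^ 2 * h ξ) - (∫ ξ, h ξ) * ‖v‖ ^ 2) := by
    refine (((HI.of i2).sub (H0.mulc (‖v‖ ^ 2))).sub ((Z1 v).cmul 2)).congr (fun ξ => ?_) (by ring)
    rw [@norm_sub_sq_real, inner_sub_left, real_inner_self_eq_norm_sq]; ring
  have HD0 : Integrable (fun ξ => (h ξ)⁻¹ * ‖gradient h ξ + h ξ • (ξ - v)‖ ^ 2) := by
    have := ((HI.of ig).add (((HI.of igx').sub (Z2 v)).cmul 2)).add H2v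
    refine (this.congr (fun ξ => ?_) rfl).1
    have h0 := (hpos ξ).ne'
    rw [@norm_add_sq_real, norm_smul, inner_smul_right, inner_sub_right, mul_pow,
      Real.norm_of_nonneg (hpos ξ).le]
    field_simp
  have HD := HI.of HD0
  have Hm : HI volume (fun ξ => (1 + ‖ξ‖ ^ 2) * h ξ) (∫ ξ, (1 + ‖ξ‖ ^ 2) * h ξ) := by
    refine HI.of ((H0.add (HI.of i2)).congr (fun ξ => by ring) rfl).1
  have H2u : HI volume (fun ξ => h ξ * ‖ξ - u‖ ^ 2)
      ((∫ ξ, ‖ξ‖ ^ 2 * h ξ) - (∫ ξ, h ξ) * ‖v‖ ^ 2 + (∫ ξ, h ξ) * ‖v - u‖ ^ 2) := by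
    refine ((H2v.add (H0.mulc (‖v - u‖ ^ 2))).add ((Z1 (v - u)).cmul 2)).congr
      (fun ξ => ?_) (by ring)
    have : ξ - u = (ξ - v) + (v - u) := by abel
    rw [this, @norm_add_sq_real]; ring
  refine ⟨?_, HD0, ?_, ?_⟩
  · rw [H2u.2]
    have : 0 ≤ (∫ ξ, ‖ξ‖ ^ 2 * h ξ) - (∫ ξ, h ξ) * ‖v‖ ^ 2 := by
      rw [← H2v.2]
      exact integral_nonneg fun ξ => mul_nonneg (hpos ξ).le (sq_nonneg _)
    linarith
  · have := ((HD.add (Z2 (v - u + v))).add (Z1 (v - u + v))).add (H0.mulc ⟪v, v - u⟫)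
    refine (this.congr (fun ξ => ?_) rfl).2.trans (by ring)
    have h0 := (hpos ξ).ne'
    have e1 : gradient h ξ + h ξ • ξ = (gradient h ξ + h ξ • (ξ - v)) + h ξ • v := by
      rw [smul_sub]; abel
    have e2 : gradient h ξ + h ξ • (ξ - u) = (gradient h ξ + h ξ • (ξ - v)) + h ξ • (v - u) := by
      rw [smul_sub, smul_sub, smul_sub]; abel
    have e3 : ⟪gradient h ξ, v - u + v⟫ + h ξ * ⟪ξ - v, v - u + v⟫
        = ⟪gradient h ξ + h ξ • (ξ - v), (v - u) + v⟫ := by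
      rw [inner_add_left, inner_smul_left]; simp
    rw [e1, e2, add_assoc _ (⟪gradient h ξ, v - u + v⟫), e3]
    generalize gradient h ξ + h ξ • (ξ - v) = w
    rw [inner_add_left, inner_add_right, inner_add_right, inner_add_right,
      real_inner_self_eq_norm_sq, inner_smul_left, inner_smul_right, inner_smul_left,
      inner_smul_right, real_inner_comm w v]
    simp only [conj_trivial]
    field_simp
    ring
  · have hlhs : HI volume (fun ξ => h ξ * (etr S - ⟪ξ - u, S (ξ - u)⟫))
        (∫ ξ, h ξ * (etr S - ⟪ξ - u, S (ξ - u)⟫)) := by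
      refine HI.of ?_
      have : Integrable fun ξ => h ξ * ⟪ξ - u, S (ξ - u)⟫ := by
        refine Integrable.mono' (H2u.1.const_mul L) ?_ ?_
        · exact (hc.mul (by fun_prop)).aestronglyMeasurable
        · refine Filter.Eventually.of_forall fun ξ => ?_
          rw [norm_mul, Real.norm_of_nonneg (hpos ξ).le]
          have h1 : ‖⟪ξ - u, S (ξ - u)⟫‖ ≤ ‖ξ - u‖ * (L * ‖ξ - u‖) :=
            (norm_inner_le_norm _ _).trans (mul_le_mul_of_nonneg_left
              (S.le_of_opNorm_le hS _) (norm_nonneg _))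
          calc _ ≤ h ξ * (‖ξ - u‖ * (L * ‖ξ - u‖)) := mul_le_mul_of_nonneg_left h1 (hpos ξ).le
            _ = _ := by ring
      refine ((i0.mul_const (etr S)).sub this).congr (Filter.Eventually.of_forall fun ξ => ?_)
      simp only [Pi.sub_apply]; ring
    have hrhs := (((((H0.mulc (‖v - u‖ ^ 2)).cmul (B * L)).add (HD.cmul (1 / (2 * τ)))).add
      (Hm.cmul (B ^ 2 * τ / 2 * L ^ 2))).sub ((Z1 v).cmul (B ^ 2 * τ * L ^ 2))).add
      ((Z3.sub ((Z1 (S (v - u))).add (Z1 (ContinuousLinearMap.adjoint S (v - u))))).cmul B)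
    have := (hlhs.cmul B).mono hrhs (fun ξ => ?_)
    · linarith
    have h0 := hpos ξ
    have e4 : ⟪ξ - v, ContinuousLinearMap.adjoint S (v - u)⟫ = ⟪v - u, S (ξ - v)⟫ := by
      rw [ContinuousLinearMap.adjoint_inner_right, real_inner_comm]
    have e5 : ‖ξ - v‖ ^ 2 = ‖ξ‖ ^ 2 - 2 * ⟪ξ - v, v⟫ - ‖v‖ ^ 2 := by
      rw [@norm_sub_sq_real, inner_sub_left, real_inner_self_eq_norm_sq]; ring
    have e6 : ⟪ξ - u, S (ξ - u)⟫ = ⟪ξ - v, S (ξ - v)⟫ + ⟪ξ - v, S (v - u)⟫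
        + ⟪v - u, S (ξ - v)⟫ + ⟪v - u, S (v - u)⟫ := by
      have : ξ - u = (ξ - v) + (v - u) := by abel
      rw [this, map_add, inner_add_left, inner_add_right, inner_add_right]; ring
    have e7 : ⟪gradient h ξ, S (ξ - v)⟫ + h ξ * ⟪ξ - v, S (ξ - v)⟫
        = ⟪gradient h ξ + h ξ • (ξ - v), S (ξ - v)⟫ := by
      rw [inner_add_left, inner_smul_left]; simp
    rw [e4, e6]
    set w := gradient h ξ + h ξ • (ξ - v) with hw
    have b1 : |⟪w, S (ξ - v)⟫| ≤ ‖w‖ * (L * ‖ξ - v‖) :=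
      (abs_real_inner_le_norm _ _).trans (mul_le_mul_of_nonneg_left
              (S.le_of_opNorm_le hS _) (norm_nonneg _))
    have b2 : |⟪v - u, S (v - u)⟫| ≤ ‖v - u‖ * (L * ‖v - u‖) :=
      (abs_real_inner_le_norm _ _).trans (mul_le_mul_of_nonneg_left
              (S.le_of_opNorm_le hS _) (norm_nonneg _))
    have b1' := (abs_le.1 b1).1
    have b2' := (abs_le.1 b2).1
    have b3 : 0 ≤ 1 / (2 * τ) * (h ξ)⁻¹ * (‖w‖ - B * τ * L * h ξ * ‖ξ - v‖) ^ 2 := by positivity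
    have b4 : 1 / (2 * τ) * (h ξ)⁻¹ * (‖w‖ - B * τ * L * h ξ * ‖ξ - v‖) ^ 2
        = 1 / (2 * τ) * ((h ξ)⁻¹ * ‖w‖ ^ 2) - B * (‖w‖ * (L * ‖ξ - v‖))
          + B ^ 2 * τ / 2 * L ^ 2 * (h ξ * ‖ξ - v‖ ^ 2) := by
      field_simp; ring
    have b5 : B ^ 2 * τ / 2 * L ^ 2 * (h ξ * ‖ξ - v‖ ^ 2) ≤
        B ^ 2 * τ / 2 * L ^ 2 * ((1 + ‖ξ‖ ^ 2) * h ξ)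
          - B ^ 2 * τ * L ^ 2 * (h ξ * ⟪ξ - v, v⟫) := by
      rw [e5]
      have : 0 ≤ B ^ 2 * τ / 2 * L ^ 2 * (h ξ * (1 + ‖v‖ ^ 2)) := by positivity
      linarith
    have b6 : -(B * ⟪w, S (ξ - v)⟫) ≤ B * (‖w‖ * (L * ‖ξ - v‖)) := by
      have := mul_le_mul_of_nonneg_left b1' hB.le
      linarith
    have b7 : -(B * (h ξ * ⟪v - u, S (v - u)⟫)) ≤ B * L * (h ξ * ‖v - u‖ ^ 2) := by
      have := mul_le_mul_of_nonneg_left b2' (mul_nonneg hB.le h0.le)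
      linarith
    have e7B : B * ⟪gradient h ξ, S (ξ - v)⟫ + B * (h ξ * ⟪ξ - v, S (ξ - v)⟫)
        = B * ⟪w, S (ξ - v)⟫ := by rw [← e7]; ring
    linarith

end RelEnt2

section RelEnt3
variable {d : ℕ}
local notation "𝔼" => EuclideanSpace ℝ (Fin d)

set_option maxHeartbeats 1000000 in
/-- Integrated version of the fibrewise estimates. -/
lemma prod_lemma {h : 𝔼 × 𝔼 → ℝ} (hpos : ∀ p, 0 < h p) (hcont : Continuous h)
    (hh : ∀ x, ContDiff ℝ 1 (fun ζ => h (x, ζ)))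
    (hg : Continuous fun p : 𝔼 × 𝔼 => gradient (fun ζ => h (p.1, ζ)) p.2)
    (u : 𝔼 → 𝔼) (hu : Continuous u) (S : 𝔼 → 𝔼 →L[ℝ] 𝔼)
    (B τ L : ℝ) (hB : 0 < B) (hτ : 0 < τ) (hS : ∀ x, ‖S x‖ ≤ L)
    (i0 : Integrable h) (i2 : Integrable fun p : 𝔼 × 𝔼 => ‖p.2‖ ^ 2 * h p)
    (ig : Integrable fun p : 𝔼 × 𝔼 => (h p)⁻¹ * ‖gradient (fun ζ => h (p.1, ζ)) p.2‖ ^ 2)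
    (iu : Integrable fun p : 𝔼 × 𝔼 => h p * ‖p.2 - u p.1‖ ^ 2)
    (iJ : Integrable fun p : 𝔼 × 𝔼 => (h p)⁻¹ * ⟪gradient (fun ζ => h (p.1, ζ)) p.2 + h p • p.2,
      gradient (fun ζ => h (p.1, ζ)) p.2 + h p • (p.2 - u p.1)⟫)
    (iS : Integrable fun p : 𝔼 × 𝔼 =>
      h p * (etr (S p.1) - ⟪p.2 - u p.1, S p.1 (p.2 - u p.1)⟫))
    (im : Integrable fun p : 𝔼 × 𝔼 => (1 + ‖p.2‖ ^ 2) * h p) :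
    (∫ p : 𝔼 × 𝔼, (h p)⁻¹ * ⟪gradient (fun ζ => h (p.1, ζ)) p.2 + h p • p.2,
      gradient (fun ζ => h (p.1, ζ)) p.2 + h p • (p.2 - u p.1)⟫)
      = (∫ p : 𝔼 × 𝔼, (h p)⁻¹ * ‖gradient (fun ζ => h (p.1, ζ)) p.2
          + h p • (p.2 - (∫ ξ, h (p.1, ξ))⁻¹ • ∫ ξ, h (p.1, ξ) • ξ)‖ ^ 2)
        + ∫ x : 𝔼, (∫ ξ, h (x, ξ)) * ⟪(∫ ξ, h (x, ξ))⁻¹ • ∫ ξ, h (x, ξ) • ξ,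
            ((∫ ξ, h (x, ξ))⁻¹ • ∫ ξ, h (x, ξ) • ξ) - u x⟫ ∧
    B * (∫ p : 𝔼 × 𝔼, h p * (etr (S p.1) - ⟪p.2 - u p.1, S p.1 (p.2 - u p.1)⟫)) ≤
      B * L * (∫ x : 𝔼, (∫ ξ, h (x, ξ)) *
          ‖((∫ ξ, h (x, ξ))⁻¹ • ∫ ξ, h (x, ξ) • ξ) - u x‖ ^ 2)
      + 1 / (2 * τ) * (∫ p : 𝔼 × 𝔼, (h p)⁻¹ * ‖gradient (fun ζ => h (p.1, ζ)) p.2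
          + h p • (p.2 - (∫ ξ, h (p.1, ξ))⁻¹ • ∫ ξ, h (p.1, ξ) • ξ)‖ ^ 2)
      + B ^ 2 * τ / 2 * L ^ 2 * (∫ p : 𝔼 × 𝔼, (1 + ‖p.2‖ ^ 2) * h p) := by
  rw [Measure.volume_eq_prod] at *
  set v : 𝔼 → 𝔼 := fun x => (∫ ξ, h (x, ξ))⁻¹ • ∫ ξ, h (x, ξ) • ξ with hv
  have mρ : StronglyMeasurable fun x => ∫ ξ, h (x, ξ) :=
    hcont.stronglyMeasurable.integral_prod_right'
  have mm : StronglyMeasurable fun x => ∫ ξ, h (x, ξ) • ξ :=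
    StronglyMeasurable.integral_prod_right' (f := fun p : 𝔼 × 𝔼 => h p • p.2)
      (hcont.smul continuous_snd).stronglyMeasurable
  have mv : StronglyMeasurable v := mρ.measurable.inv.stronglyMeasurable.smul mm
  have fib := (i0.prod_right_ae.and (i2.prod_right_ae.and ig.prod_right_ae)).mono fun x hx =>
    And.intro (fiber_lemma (h := fun ξ => h (x, ξ)) (fun ξ => hpos _) (hh x) hx.1 hx.2.1 hx.2.2 (u x) (v x) (S x)
      B τ L hB hτ (hS x) rfl) (fiber_lemma (h := fun ξ => h (x, ξ)) (fun ξ => hpos _) (hh x) hx.1 hx.2.1 hx.2.2 0 (v x) (S x)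
      B τ L hB hτ (hS x) rfl).1
  have ρnn : ∀ x, 0 ≤ ∫ ξ, h (x, ξ) := fun x => integral_nonneg fun ξ => (hpos _).le
  have iP : Integrable fun x => (∫ ξ, h (x, ξ)) * ‖v x - u x‖ ^ 2 := by
    refine Integrable.mono' iu.integral_prod_left ?_ ?_
    · exact (mρ.mul ((mv.sub hu.stronglyMeasurable).norm.pow 2)).aestronglyMeasurable
    · filter_upwards [fib] with x hx
      rw [Real.norm_of_nonneg (mul_nonneg (ρnn x) (sq_nonneg _))]
      exact hx.1.1
  have i2' : Integrable (fun p : 𝔼 × 𝔼 => h p * ‖p.2 - 0‖ ^ 2)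
      ((volume : Measure 𝔼).prod volume) := by
    refine i2.congr (Filter.Eventually.of_forall fun p => ?_)
    simp [mul_comm]
  have iV : Integrable fun x => (∫ ξ, h (x, ξ)) * ‖v x‖ ^ 2 := by
    refine Integrable.mono' i2'.integral_prod_left ?_ ?_
    · exact (mρ.mul (mv.norm.pow 2)).aestronglyMeasurable
    · filter_upwards [fib] with x hx
      rw [Real.norm_of_nonneg (mul_nonneg (ρnn x) (sq_nonneg _))]
      simpa using hx.2
  have iQ : Integrable fun x => (∫ ξ, h (x, ξ)) * ⟪v x, v x - u x⟫ := by
    refine Integrable.mono' (iV.add iP) ?_ ?_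
    · exact (mρ.mul (mv.inner (mv.sub hu.stronglyMeasurable))).aestronglyMeasurable
    · refine Filter.Eventually.of_forall fun x => ?_
      rw [norm_mul, Real.norm_of_nonneg (ρnn x), Pi.add_apply, ← mul_add]
      refine mul_le_mul_of_nonneg_left ?_ (ρnn x)
      refine (norm_inner_le_norm _ _).trans ?_
      nlinarith [sq_nonneg (‖v x‖ - ‖v x - u x‖), sq_nonneg (‖v x‖), sq_nonneg (‖v x - u x‖)]
  have hDnn : ∀ p : 𝔼 × 𝔼, 0 ≤ (h p)⁻¹ * ‖gradient (fun ζ => h (p.1, ζ)) p.2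
          + h p • (p.2 - v p.1)‖ ^ 2 := fun p => by
    have := hpos p
    positivity
  have iD : Integrable (fun p : 𝔼 × 𝔼 => (h p)⁻¹ * ‖gradient (fun ζ => h (p.1, ζ)) p.2
          + h p • (p.2 - v p.1)‖ ^ 2) ((volume : Measure 𝔼).prod volume) := by
    rw [integrable_prod_iff]
    · refine ⟨?_, ?_⟩
      · filter_upwards [fib] with x hx
        exact hx.1.2.1
      · refine (iJ.integral_prod_left.sub iQ).congr ?_
        filter_upwards [fib] with x hx
        have e := hx.1.2.2.1
        rw [Pi.sub_apply, e, add_sub_cancel_right]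
        refine integral_congr_ae (Filter.Eventually.of_forall fun ξ => ?_)
        exact (Real.norm_of_nonneg (hDnn (x, ξ))).symm
    · refine StronglyMeasurable.aestronglyMeasurable ?_
      refine (hcont.measurable.inv.stronglyMeasurable).mul (StronglyMeasurable.pow ?_ 2)
      refine StronglyMeasurable.norm (hg.stronglyMeasurable.add
        (hcont.stronglyMeasurable.smul (continuous_snd.stronglyMeasurable.sub ?_)))
      exact mv.comp_measurable measurable_fst
  constructor
  · rw [integral_prod _ iJ, integral_prod _ iD, ← integral_add iD.integral_prod_left iQ]
    refine integral_congr_ae ?_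
    filter_upwards [fib] with x hx
    exact hx.1.2.2.1
  · rw [integral_prod _ iS, integral_prod _ iD, integral_prod _ im]
    have hr := (((HI.of iP).cmul (B * L)).add ((HI.of iD.integral_prod_left).cmul (1 / (2 * τ)))).add
      ((HI.of im.integral_prod_left).cmul (B ^ 2 * τ / 2 * L ^ 2))
    rw [← hr.2, ← integral_const_mul]
    refine integral_mono_ae (iS.integral_prod_left.const_mul B) hr.1 ?_
    filter_upwards [fib] with x hx
    exact hx.1.2.2.2

end RelEnt3

section RelEnt4

/-- Polynomial boundedness with respect to a weight `W`. -/
def PB {α V : Type*} [SeminormedAddCommGroup V] (W : α → ℝ) (h : α → V) : Prop :=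
  ∃ c : ℝ, 0 ≤ c ∧ ∃ k : ℕ, ∀ a, ‖h a‖ ≤ c * W a ^ k

namespace PB
variable {α V : Type*} [SeminormedAddCommGroup V] {W : α → ℝ}

lemma of_norm_le {V' : Type*} [SeminormedAddCommGroup V'] {h : α → V} {h' : α → V'} (H : PB W h)
    (hle : ∀ a, ‖h' a‖ ≤ ‖h a‖) : PB W h' := by
  obtain ⟨c, hc, k, hk⟩ := H
  exact ⟨c, hc, k, fun a => (hle a).trans (hk a)⟩

lemma const (hW : ∀ a, 1 ≤ W a) (v : V) : PB W (fun _ => v) :=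
  ⟨‖v‖, norm_nonneg _, 0, fun a => by simp⟩

lemma add (hW : ∀ a, 1 ≤ W a) {h g : α → V} (H : PB W h) (G : PB W g) :
    PB W (fun a => h a + g a) := by
  obtain ⟨c, hc, k, hk⟩ := H
  obtain ⟨c', hc', k', hk'⟩ := G
  refine ⟨c + c', add_nonneg hc hc', k + k', fun a => (norm_add_le _ _).trans ?_⟩
  rw [add_mul]
  refine add_le_add ((hk a).trans ?_) ((hk' a).trans ?_)
  · exact mul_le_mul_of_nonneg_left (pow_le_pow_right₀ (hW a) (by omega)) hc
  · exact mul_le_mul_of_nonneg_left (pow_le_pow_right₀ (hW a) (by omega)) hc'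

lemma neg {h : α → V} (H : PB W h) : PB W (fun a => - h a) :=
  H.of_norm_le fun a => (norm_neg _).le

lemma sub (hW : ∀ a, 1 ≤ W a) {h g : α → V} (H : PB W h) (G : PB W g) :
    PB W (fun a => h a - g a) := by
  simpa [sub_eq_add_neg] using H.add hW G.neg

lemma norm_mul {h : α → V} {V' : Type*} [SeminormedAddCommGroup V'] {g : α → V'}
    (H : PB W h) (G : PB W g) : PB W (fun a => ‖h a‖ * ‖g a‖) := by
  obtain ⟨c, hc, k, hk⟩ := H
  obtain ⟨c', hc', k', hk'⟩ := G
  refine ⟨c * c', mul_nonneg hc hc', k + k', fun a => ?_⟩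
  rw [Real.norm_of_nonneg (by positivity)]
  refine (mul_le_mul (hk a) (hk' a) (norm_nonneg _) ((norm_nonneg _).trans (hk a))).trans
    (le_of_eq (by ring))

lemma mul {h g : α → ℝ} (H : PB W h) (G : PB W g) : PB W (fun a => h a * g a) :=
  (H.norm_mul G).of_norm_le fun a => by simp

lemma smul [NormedSpace ℝ V] {h : α → ℝ} {g : α → V} (H : PB W h) (G : PB W g) :
    PB W (fun a => h a • g a) :=
  (H.norm_mul G).of_norm_le fun a => by simp [norm_smul]

lemma inner {V : Type*} [NormedAddCommGroup V] [InnerProductSpace ℝ V] {h g : α → V}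
    (H : PB W h) (G : PB W g) : PB W (fun a => ⟪h a, g a⟫) :=
  (H.norm_mul G).of_norm_le fun a => by
    rw [Real.norm_of_nonneg (by positivity : 0 ≤ ‖h a‖ * ‖g a‖)]
    exact norm_inner_le_norm _ _

lemma apply {U V : Type*} [NormedAddCommGroup V] [NormedSpace ℝ V] [NormedAddCommGroup U]
    [NormedSpace ℝ U] {h : α → U →L[ℝ] V} {g : α → U}
    (H : PB W h) (G : PB W g) : PB W (fun a => h a (g a)) :=
  (H.norm_mul G).of_norm_le fun a => by
    rw [Real.norm_of_nonneg (by positivity : 0 ≤ ‖h a‖ * ‖g a‖)]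
    exact (h a).le_opNorm _

lemma sqnorm {h : α → V} (H : PB W h) : PB W (fun a => ‖h a‖ ^ 2) := by
  simpa [sq] using H.norm_mul H

lemma comp {β : Type*} {h : α → V} (H : PB W h) (φ : β → α) {W' : β → ℝ}
    (hφ : ∀ b, W (φ b) = W' b) : PB W' (fun b => h (φ b)) := by
  obtain ⟨c, hc, k, hk⟩ := H
  exact ⟨c, hc, k, fun b => by rw [← hφ]; exact hk _⟩

end PB

variable {d : ℕ}
local notation "𝔼" => EuclideanSpace ℝ (Fin d)

/-- The phase-space weight. -/
noncomputable def wt (p : EuclideanSpace ℝ (Fin d) × EuclideanSpace ℝ (Fin d)) : ℝ :=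
  1 + ‖p.1‖ + ‖p.2‖

lemma one_le_wt (p : 𝔼 × 𝔼) : 1 ≤ wt p := by
  unfold wt; linarith [norm_nonneg p.1, norm_nonneg p.2]

lemma integrable_PB {V : Type*} [NormedAddCommGroup V] [NormedSpace ℝ V] {h : 𝔼 × 𝔼 → ℝ}
    (hpos : ∀ p, 0 < h p) (hc : Continuous h)
    (hmom : ∀ N : ℕ, Integrable fun p => wt p ^ N * h p) {κ : 𝔼 × 𝔼 → V}
    (hκ : PB wt κ) (hκc : AEStronglyMeasurable κ) : Integrable fun p => h p • κ p := by
  obtain ⟨c, hc0, k, hk⟩ := hκ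
  refine Integrable.mono' ((hmom k).const_mul c) (hc.aestronglyMeasurable.smul hκc) ?_
  refine Filter.Eventually.of_forall fun p => ?_
  rw [norm_smul, Real.norm_of_nonneg (hpos p).le]
  calc h p * ‖κ p‖ ≤ h p * (c * wt p ^ k) := mul_le_mul_of_nonneg_left (hk p) (hpos p).le
    _ = _ := by ring

lemma HI_ediv_snd {G : 𝔼 × 𝔼 → 𝔼} (hG : ∀ x, ContDiff ℝ 1 fun ζ => G (x, ζ))
    (hi : Integrable G) (hd : Integrable fun p : 𝔼 × 𝔼 => ediv (fun ζ => G (p.1, ζ)) p.2) :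
    HI volume (fun p : 𝔼 × 𝔼 => ediv (fun ζ => G (p.1, ζ)) p.2) 0 := by
  refine ⟨hd, ?_⟩
  rw [Measure.volume_eq_prod] at *
  rw [integral_prod _ hd]
  have : ∀ᵐ x : 𝔼, ∫ ξ, ediv (fun ζ => G (x, ζ)) ξ = 0 := by
    filter_upwards [hi.prod_right_ae, hd.prod_right_ae] with x h1 h2
    exact integral_ediv (hG x) h1 h2
  exact (integral_congr_ae this).trans (by simp)

lemma HI_ediv_fst {G : 𝔼 × 𝔼 → 𝔼} (hG : ∀ ξ, ContDiff ℝ 1 fun y => G (y, ξ))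
    (hi : Integrable G) (hd : Integrable fun p : 𝔼 × 𝔼 => ediv (fun y => G (y, p.2)) p.1) :
    HI volume (fun p : 𝔼 × 𝔼 => ediv (fun y => G (y, p.2)) p.1) 0 := by
  refine ⟨hd, ?_⟩
  rw [Measure.volume_eq_prod] at *
  rw [integral_prod_symm _ hd]
  have : ∀ᵐ ξ : 𝔼, ∫ x, ediv (fun y => G (y, ξ)) x = 0 := by
    filter_upwards [hi.prod_left_ae, hd.prod_left_ae] with x h1 h2
    exact integral_ediv (hG x) h1 h2
  exact (integral_congr_ae this).trans (by simp)

end RelEnt4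

section RelEnt5
variable {d : ℕ}
local notation "𝔼" => EuclideanSpace ℝ (Fin d)

lemma PB_snd : PB (wt (d := d)) (fun p : 𝔼 × 𝔼 => p.2) :=
  ⟨1, zero_le_one, 1, fun p => by unfold wt; linarith [norm_nonneg p.1]⟩

lemma fderiv_slice_snd {V : Type*} [NormedAddCommGroup V] [NormedSpace ℝ V] {φ : 𝔼 × 𝔼 → V}
    (hφ : Differentiable ℝ φ) (x ξ : 𝔼) :
    HasFDerivAt (fun ζ => φ (x, ζ))
      ((fderiv ℝ φ (x, ξ)).comp (ContinuousLinearMap.inr ℝ 𝔼 𝔼)) ξ :=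
  (hφ (x, ξ)).hasFDerivAt.comp ξ (hasFDerivAt_prodMk_right x ξ)

lemma fderiv_slice_fst {V : Type*} [NormedAddCommGroup V] [NormedSpace ℝ V] {φ : 𝔼 × 𝔼 → V}
    (hφ : Differentiable ℝ φ) (x ξ : 𝔼) :
    HasFDerivAt (fun y => φ (y, ξ))
      ((fderiv ℝ φ (x, ξ)).comp (ContinuousLinearMap.inl ℝ 𝔼 𝔼)) x :=
  (hφ (x, ξ)).hasFDerivAt.comp x (hasFDerivAt_prodMk_left x ξ)

set_option maxHeartbeats 2000000 in
lemma fixed_time {φ h : 𝔼 × 𝔼 → ℝ} (hφ : ContDiff ℝ 2 φ) (hh : h = fun p => Real.exp (-φ p))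
    (hmom : ∀ N : ℕ, Integrable fun p => wt p ^ N * h p)
    {F : 𝔼 × 𝔼 → 𝔼} (hF : ContDiff ℝ 1 F) {r : 𝔼 → ℝ} (hr : ContDiff ℝ 1 r)
    {u : 𝔼 → 𝔼} (hu : ContDiff ℝ 1 u) {R : 𝔼 → 𝔼} (hR : Continuous R)
    {κ : 𝔼 × 𝔼 → ℝ} (hκ : Continuous κ) (rt : 𝔼 → ℝ) (ut : 𝔼 → 𝔼) (c0 : ℝ)
    (pφ : PB wt φ) (pdφ : PB wt (fderiv ℝ φ)) (pF : PB wt F)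
    (pδ : PB wt fun p : 𝔼 × 𝔼 => ediv (fun ζ => F (p.1, ζ)) p.2)
    (pr : PB wt fun p : 𝔼 × 𝔼 => r p.1) (pdr : PB wt fun p : 𝔼 × 𝔼 => fderiv ℝ r p.1)
    (pu : PB wt fun p : 𝔼 × 𝔼 => u p.1) (pdu : PB wt fun p : 𝔼 × 𝔼 => fderiv ℝ u p.1)
    (pR : PB wt fun p : 𝔼 × 𝔼 => R p.1) (pκ : PB wt κ)
    (A B τ L : ℝ) (hA : 0 < A) (hB : 0 < B) (hτ : 0 < τ)
    (hkin : ∀ p : 𝔼 × 𝔼, A * (κ p * h p) + B * ⟪p.2, gradient (fun y => h (y, p.2)) p.1⟫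
      + ediv (fun ζ => h (p.1, ζ) • F (p.1, ζ)) p.2
      = (1 / τ) * ediv (fun ζ => gradient (fun ζ' => h (p.1, ζ')) ζ + h (p.1, ζ) • ζ) p.2)
    (hmass : ∀ x, A * rt x = -B * etr (fderiv ℝ u x) - B * fderiv ℝ r x (u x))
    (hmomt : ∀ x a, A * ⟪ut x, a⟫ + B * ⟪fderiv ℝ u x (u x), a⟫ + B * fderiv ℝ r x a = ⟪R x, a⟫)
    (hL : ∀ x, ‖fderiv ℝ u x‖ ≤ L) :
    (∫ p : 𝔼 × 𝔼, ((-φ p - r p.1 + c0 + ‖p.2 - u p.1‖ ^ 2 / 2 + 1) * (κ p * h p)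
        - h p * (rt p.1 + ⟪p.2 - u p.1, ut p.1⟫)))
      + (1 / (2 * τ * A)) * (∫ p : 𝔼 × 𝔼, (h p)⁻¹ * ‖gradient (fun ζ => h (p.1, ζ)) p.2
          + h p • (p.2 - (∫ ξ, h (p.1, ξ))⁻¹ • ∫ ξ, h (p.1, ξ) • ξ)‖ ^ 2)
    ≤ (B / A) * L * (∫ x : 𝔼, (∫ ξ, h (x, ξ)) *
          ‖((∫ ξ, h (x, ξ))⁻¹ • ∫ ξ, h (x, ξ) • ξ) - u x‖ ^ 2)
      + (B ^ 2 * τ / (2 * A)) * L ^ 2 * (∫ p : 𝔼 × 𝔼, (1 + ‖p.2‖ ^ 2) * h p)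
      - (1 / (A * τ)) * (∫ x : 𝔼, (∫ ξ, h (x, ξ)) * ⟪(∫ ξ, h (x, ξ))⁻¹ • ∫ ξ, h (x, ξ) • ξ,
            ((∫ ξ, h (x, ξ))⁻¹ • ∫ ξ, h (x, ξ) • ξ) - u x⟫)
      - (1 / A) * (∫ p : 𝔼 × 𝔼, ediv (fun ζ => F (p.1, ζ)) p.2 * h p)
      - (1 / A) * (∫ p : 𝔼 × 𝔼, h p * ⟪u p.1 - p.2, F p - R p.1⟫) := by
  have hW := one_le_wt (d := d)
  have hpos : ∀ p, 0 < h p := fun p => by rw [hh]; exact Real.exp_pos _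
  have hφd : Differentiable ℝ φ := hφ.differentiable two_ne_zero
  have hh2 : ContDiff ℝ 2 h := by rw [hh]; exact hφ.neg.exp
  have hhc : Continuous h := hh2.continuous
  have hdφc : ContDiff ℝ 1 (fderiv ℝ φ) := hφ.fderiv_right (by norm_num)
  -- the two partial gradients of `φ`
  let n : 𝔼 × 𝔼 → 𝔼 := fun p => (InnerProductSpace.toDual ℝ 𝔼).symm
    ((fderiv ℝ φ p).comp (ContinuousLinearMap.inr ℝ 𝔼 𝔼))
  have hn1 : ContDiff ℝ 1 n :=
    (InnerProductSpace.toDual ℝ 𝔼).symm.toContinuousLinearEquiv.contDiff.comp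
      (hdφc.clm_comp contDiff_const)
  have hninner : ∀ p a, ⟪n p, a⟫ = fderiv ℝ φ p (0, a) := by
    intro p a
    simp [n]
  have pn : PB wt n := pdφ.of_norm_le fun p => by
    simp only [n, LinearIsometryEquiv.norm_map]
    refine (ContinuousLinearMap.opNorm_comp_le _ _).trans ?_
    exact mul_le_of_le_one_right (norm_nonneg _) (ContinuousLinearMap.norm_inr_le_one ..)
  let ax : 𝔼 × 𝔼 → ℝ := fun p => fderiv ℝ φ p (p.2, 0)
  have cax : Continuous ax := hdφc.continuous.clm_apply (by fun_prop)
  have pax : PB wt ax := pdφ.apply (PB_snd.of_norm_le fun p => by simp)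
  have dh1 : ∀ x ξ, HasFDerivAt (fun y => h (y, ξ))
      (-(h (x, ξ)) • (fderiv ℝ φ (x, ξ)).comp (ContinuousLinearMap.inl ℝ 𝔼 𝔼)) x := by
    intro x ξ
    have := (fderiv_slice_fst hφd x ξ).neg.exp
    rw [hh]; refine this.congr_fderiv ?_
    ext a; simp
  have dh2 : ∀ x ξ, HasFDerivAt (fun ζ => h (x, ζ))
      (-(h (x, ξ)) • (fderiv ℝ φ (x, ξ)).comp (ContinuousLinearMap.inr ℝ 𝔼 𝔼)) ξ := by
    intro x ξ
    have := (fderiv_slice_snd hφd x ξ).neg.exp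
    rw [hh]; refine this.congr_fderiv ?_
    ext a; simp
  have gradh : ∀ x ξ, gradient (fun ζ => h (x, ζ)) ξ = -(h (x, ξ)) • n (x, ξ) := by
    intro x ξ
    unfold gradient
    rw [(dh2 x ξ).fderiv, map_smul]
  have gradhx : ∀ p : 𝔼 × 𝔼, ⟪p.2, gradient (fun y => h (y, p.2)) p.1⟫ = -(h p) * ax p := by
    intro p
    rw [inner_gradient_right, (dh1 p.1 p.2).fderiv]
    simp [ax]
  -- the divergence of `F`
  let δ : 𝔼 × 𝔼 → ℝ := fun p => ediv (fun ζ => F (p.1, ζ)) p.2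
  have hFd : Differentiable ℝ F := hF.differentiable one_ne_zero
  have dF2 : ∀ x ξ, DifferentiableAt ℝ (fun ζ => F (x, ζ)) ξ := fun x ξ =>
    (fderiv_slice_snd hFd x ξ).differentiableAt
  have cδ : Continuous δ := by
    have : δ = fun p : 𝔼 × 𝔼 => etr ((fderiv ℝ F p).comp (ContinuousLinearMap.inr ℝ 𝔼 𝔼)) := by
      funext p
      simp only [δ, ediv_eq_etr, (fderiv_slice_snd hFd p.1 p.2).fderiv]
    rw [this]
    exact continuous_etr.comp ((hF.continuous_fderiv one_ne_zero).clm_comp continuous_const)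
  -- the function `g = log (f / M)`
  let g : 𝔼 × 𝔼 → ℝ := fun p => -φ p - r p.1 + c0 + ‖p.2 - u p.1‖ ^ 2 / 2
  have hg1 : ContDiff ℝ 1 g := by
    have hφ1 : ContDiff ℝ 1 φ := hφ.of_le (by norm_num)
    have h1 : ContDiff ℝ 1 fun p : 𝔼 × 𝔼 => p.2 - u p.1 :=
      contDiff_snd.sub (hu.comp contDiff_fst)
    have h2 : ContDiff ℝ 1 fun p : 𝔼 × 𝔼 => ‖p.2 - u p.1‖ ^ 2 := h1.norm_sq ℝ
    have h3 : ContDiff ℝ 1 fun p : 𝔼 × 𝔼 => r p.1 := hr.comp contDiff_fst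
    exact (((hφ1.neg).sub h3).add contDiff_const).add (h2.div_const 2)
  have pxu : PB wt (fun p : 𝔼 × 𝔼 => p.2 - u p.1) := PB_snd.sub hW pu
  have pg : PB wt g := by
    have := ((pφ.neg.sub hW pr).add hW (PB.const hW c0)).add hW
      (pxu.sqnorm.mul (PB.const hW (1/2 : ℝ)))
    refine this.of_norm_le fun p => le_of_eq ?_
    simp only [g]; congr 1; ring
  have pg1 : PB wt (fun p => g p + 1) := pg.add hW (PB.const hW 1)
  have dg2 : ∀ x ξ, HasFDerivAt (fun ζ => g (x, ζ))
      (-(fderiv ℝ φ (x, ξ)).comp (ContinuousLinearMap.inr ℝ 𝔼 𝔼) + innerSL ℝ (ξ - u x)) ξ := by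
    intro x ξ
    have h1 : HasFDerivAt (fun ζ : 𝔼 => ‖ζ - u x‖ ^ 2 / 2) (innerSL ℝ (ξ - u x)) ξ := by
      have := (((hasFDerivAt_id ξ).sub_const (u x)).norm_sq).mul_const (1 / 2 : ℝ)
      refine (this.congr_fderiv ?_).congr_of_eventuallyEq (Filter.Eventually.of_forall fun ζ => ?_)
      · ext a; simp
      · simp; ring
    have h2 := (((fderiv_slice_snd hφd x ξ).neg.sub_const (r x)).add_const c0).add h1
    exact h2
  have dg1 : ∀ x ξ, HasFDerivAt (fun y => g (y, ξ))
      (-(fderiv ℝ φ (x, ξ)).comp (ContinuousLinearMap.inl ℝ 𝔼 𝔼) - fderiv ℝ r x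
        - (innerSL ℝ (ξ - u x)).comp (fderiv ℝ u x)) x := by
    intro x ξ
    have hux := (hu.differentiable one_ne_zero x).hasFDerivAt
    have hrx := (hr.differentiable one_ne_zero x).hasFDerivAt
    have h1 : HasFDerivAt (fun y : 𝔼 => ‖ξ - u y‖ ^ 2 / 2)
        (-(innerSL ℝ (ξ - u x)).comp (fderiv ℝ u x)) x := by
      have := ((hux.const_sub ξ).norm_sq).mul_const (1 / 2 : ℝ)
      refine (this.congr_fderiv ?_).congr_of_eventuallyEq (Filter.Eventually.of_forall fun ζ => ?_)
      · ext a; simp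
      · simp; ring
    have h2 := (((fderiv_slice_fst hφd x ξ).neg.sub hrx).add_const c0).add h1
    rw [sub_eq_add_neg _ ((innerSL ℝ (ξ - u x)).comp (fderiv ℝ u x))]
    exact h2
  -- slices are `C¹`
  have sl1 : ∀ {V : Type} [NormedAddCommGroup V] [NormedSpace ℝ V] {G : 𝔼 × 𝔼 → V},
      ContDiff ℝ 1 G → ∀ ξ, ContDiff ℝ 1 fun y => G (y, ξ) := by
    intro V _ _ G hG ξ
    exact hG.comp (contDiff_id.prodMk contDiff_const)
  have sl2 : ∀ {V : Type} [NormedAddCommGroup V] [NormedSpace ℝ V] {G : 𝔼 × 𝔼 → V},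
      ContDiff ℝ 1 G → ∀ x, ContDiff ℝ 1 fun ζ => G (x, ζ) := by
    intro V _ _ G hG ξ
    exact hG.comp (contDiff_const.prodMk contDiff_id)
  have hh1 : ContDiff ℝ 1 h := hh2.of_le (by norm_num)
  -- continuity bookkeeping
  have cφ := hφ.continuous
  have cn := hn1.continuous
  have cg := hg1.continuous
  have cF := hF.continuous
  have cu := hu.continuous
  have cdu := hu.continuous_fderiv one_ne_zero
  have cdr := hr.continuous_fderiv one_ne_zero
  have cu1 : Continuous fun p : 𝔼 × 𝔼 => u p.1 := cu.comp continuous_fst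
  have cR1 : Continuous fun p : 𝔼 × 𝔼 => R p.1 := hR.comp continuous_fst
  have cdu1 : Continuous fun p : 𝔼 × 𝔼 => fderiv ℝ u p.1 := cdu.comp continuous_fst
  have cdr1 : Continuous fun p : 𝔼 × 𝔼 => fderiv ℝ r p.1 := cdr.comp continuous_fst
  have cxu : Continuous fun p : 𝔼 × 𝔼 => p.2 - u p.1 := continuous_snd.sub cu1
  have int : ∀ {κ' : 𝔼 × 𝔼 → ℝ}, PB wt κ' → Continuous κ' → Integrable fun p => h p * κ' p :=
    fun h1 h2 => integrable_PB hpos hhc hmom h1 h2.aestronglyMeasurable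
  have intv : ∀ {κ' : 𝔼 × 𝔼 → 𝔼}, PB wt κ' → Continuous κ' → Integrable fun p => h p • κ' p :=
    fun h1 h2 => integrable_PB hpos hhc hmom h1 h2.aestronglyMeasurable
  -- scalar abbreviations
  let b : 𝔼 × 𝔼 → ℝ := fun p => fderiv ℝ r p.1 p.2
  have cb : Continuous b := cdr1.clm_apply continuous_snd
  have pb : PB wt b := pdr.apply PB_snd
  let e : 𝔼 × 𝔼 → ℝ := fun p => ⟪p.2 - u p.1, fderiv ℝ u p.1 p.2⟫
  have ce : Continuous e := cxu.inner (cdu1.clm_apply continuous_snd)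
  have pe : PB wt e := pxu.inner (pdu.apply PB_snd)
  let q : 𝔼 × 𝔼 → ℝ := fun p => ⟪n p, F p⟫
  have cq : Continuous q := cn.inner cF
  have pq : PB wt q := pn.inner pF
  let s : 𝔼 × 𝔼 → ℝ := fun p => ⟪p.2 - u p.1, F p⟫
  have cs : Continuous s := cxu.inner cF
  have ps : PB wt s := pxu.inner pF
  -- first divergence
  have D1 : HI volume (fun p => h p * (-(ax p) * g p + (-(ax p) - b p - e p))) 0 := by
    have key : ∀ p : 𝔼 × 𝔼, ediv (fun y => h (y, p.2) • (g (y, p.2) • p.2)) p.1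
        = h p * (-(ax p) * g p + (-(ax p) - b p - e p)) := by
      intro p
      have dd : DifferentiableAt ℝ (fun y => g (y, p.2)) p.1 := (dg1 p.1 p.2).differentiableAt
      rw [ediv_smul (dh1 p.1 p.2).differentiableAt (dd.smul_const p.2),
        ediv_smul dd (differentiableAt_const _), ediv_const, (dh1 p.1 p.2).fderiv,
        (dg1 p.1 p.2).fderiv]
      simp [ax, b, e, inner_sub_left]
      ring
    have hi : Integrable fun p : 𝔼 × 𝔼 => h p • (g p • p.2) :=
      intv (pg.smul PB_snd) (cg.smul continuous_snd)
    have hd : Integrable fun p => h p * (-(ax p) * g p + (-(ax p) - b p - e p)) :=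
      int ((pax.neg.mul pg).add hW ((pax.neg.sub hW pb).sub hW pe))
        ((cax.neg.mul cg).add ((cax.neg.sub cb).sub ce))
    have := HI_ediv_fst (G := fun p : 𝔼 × 𝔼 => h p • (g p • p.2))
      (fun ξ => sl1 (hh1.smul (hg1.smul contDiff_snd)) ξ) hi
      (hd.congr (Filter.Eventually.of_forall fun p => (key p).symm))
    exact this.congr (fun p => (key p).symm) rfl
  have D2 : HI volume (fun p => h p * (-(q p) * g p + (-(q p) + s p) + g p * δ p)) 0 := by
    have key : ∀ p : 𝔼 × 𝔼, ediv (fun ζ => h (p.1, ζ) • (g (p.1, ζ) • F (p.1, ζ))) p.2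
        = h p * (-(q p) * g p + (-(q p) + s p) + g p * δ p) := by
      intro p
      have dd : DifferentiableAt ℝ (fun ζ => g (p.1, ζ)) p.2 := (dg2 p.1 p.2).differentiableAt
      have dd2 : DifferentiableAt ℝ (fun ζ => g (p.1, ζ) • F (p.1, ζ)) p.2 := dd.smul (dF2 _ _)
      rw [ediv_smul (dh2 p.1 p.2).differentiableAt dd2,
        ediv_smul dd (dF2 _ _), (dh2 p.1 p.2).fderiv, (dg2 p.1 p.2).fderiv]
      simp [q, s, δ, hninner, inner_sub_left]
      ring
    have hi : Integrable fun p : 𝔼 × 𝔼 => h p • (g p • F p) :=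
      intv (pg.smul pF) (cg.smul cF)
    have hd : Integrable fun p => h p * (-(q p) * g p + (-(q p) + s p) + g p * δ p) :=
      int (((pq.neg.mul pg).add hW (pq.neg.add hW ps)).add hW (pg.mul pδ))
        (((cq.neg.mul cg).add (cq.neg.add cs)).add (cg.mul cδ))
    have := HI_ediv_snd (G := fun p : 𝔼 × 𝔼 => h p • (g p • F p))
      (fun ξ => sl2 (hh1.smul (hg1.smul hF)) ξ) hi
      (hd.congr (Filter.Eventually.of_forall fun p => (key p).symm))
    exact this.congr (fun p => (key p).symm) rfl
  -- the flux `J = h (ξ - n)`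
  have hJ : ∀ x ζ, gradient (fun ζ' => h (x, ζ')) ζ + h (x, ζ) • ζ = h (x, ζ) • (ζ - n (x, ζ)) := by
    intro x ζ; rw [gradh, smul_sub, neg_smul]; abel
  have J1 : ContDiff ℝ 1 fun p : 𝔼 × 𝔼 => h p • (p.2 - n p) := hh1.smul (contDiff_snd.sub hn1)
  have pxn : PB wt fun p : 𝔼 × 𝔼 => p.2 - n p := PB_snd.sub hW pn
  have cxn : Continuous fun p : 𝔼 × 𝔼 => p.2 - n p := continuous_snd.sub cn
  have hdivJ : ∀ p : 𝔼 × 𝔼, (1 / τ) * ediv (fun ζ => h (p.1, ζ) • (ζ - n (p.1, ζ))) p.2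
      = h p * (A * κ p - B * ax p - q p + δ p) := by
    intro p
    have := hkin p
    simp_rw [hJ] at this
    rw [← this, gradhx, ediv_smul (dh2 p.1 p.2).differentiableAt (dF2 _ _), (dh2 p.1 p.2).fderiv]
    simp [q, δ, hninner]
    ring
  let z : 𝔼 × 𝔼 → ℝ := fun p => ⟪p.2 - n p, -n p + (p.2 - u p.1)⟫
  have cz : Continuous z := cxn.inner (cn.neg.add cxu)
  have pz : PB wt z := pxn.inner (pn.neg.add hW pxu)
  have D3 : HI volume (fun p => h p * (1 / τ * z p
      + (g p + 1) * (A * κ p - B * ax p - q p + δ p))) 0 := by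
    have key : ∀ p : 𝔼 × 𝔼, ediv (fun ζ => (1 / τ * (g (p.1, ζ) + 1)) •
        (h (p.1, ζ) • (ζ - n (p.1, ζ)))) p.2
        = h p * (1 / τ * z p + (g p + 1) * (A * κ p - B * ax p - q p + δ p)) := by
      intro p
      have dd := ((dg2 p.1 p.2).add_const 1).const_mul (1 / τ)
      rw [ediv_smul dd.differentiableAt ((sl2 J1 p.1).differentiable one_ne_zero p.2),
        dd.fderiv, mul_assoc, mul_left_comm, hdivJ]
      have e1 : z p = fderiv ℝ φ p (0, n p) - fderiv ℝ φ p (0, p.2)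
          + ⟪p.2 - u p.1, p.2 - n p⟫ := by
        simp only [z, ← hninner]
        rw [inner_add_right, inner_neg_right, inner_sub_left, real_inner_comm (n p) p.2,
          real_inner_comm (p.2 - u p.1) (p.2 - n p)]
        ring
      have e2 : fderiv ℝ φ p (0, p.2 - n p) = fderiv ℝ φ p (0, p.2) - fderiv ℝ φ p (0, n p) := by
        rw [← map_sub]; simp
      rw [e1]
      simp [e2, inner_sub_left]
      ring
    have hi : Integrable fun p : 𝔼 × 𝔼 => (1 / τ * (g p + 1)) • (h p • (p.2 - n p)) := by
      have : Integrable fun p : 𝔼 × 𝔼 => h p • ((1 / τ * (g p + 1)) • (p.2 - n p)) :=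
        intv (((PB.const hW (1 / τ)).mul pg1).smul pxn)
          ((continuous_const.mul (cg.add continuous_const)).smul cxn)
      refine this.congr (Filter.Eventually.of_forall fun p => ?_)
      exact smul_comm _ _ _
    have hd : Integrable fun p => h p * (1 / τ * z p
        + (g p + 1) * (A * κ p - B * ax p - q p + δ p)) :=
      int (((PB.const hW (1 / τ)).mul pz).add hW (pg1.mul (((((PB.const hW A).mul pκ).sub hW
          ((PB.const hW B).mul pax)).sub hW pq).add hW pδ)))
        (by fun_prop)
    have := HI_ediv_snd (G := fun p : 𝔼 × 𝔼 => (1 / τ * (g p + 1)) • (h p • (p.2 - n p)))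
      (fun ξ => sl2 ((contDiff_const.mul (hg1.add contDiff_const)).smul J1) ξ) hi
      (hd.congr (Filter.Eventually.of_forall fun p => (key p).symm))
    exact this.congr (fun p => (key p).symm) rfl
  -- remaining integrals
  have HF : HI volume (fun p : 𝔼 × 𝔼 => ediv (fun ζ => F (p.1, ζ)) p.2 * h p) _ :=
    HI.of ((int pδ cδ).congr (Filter.Eventually.of_forall fun p => mul_comm _ _))
  have HR : HI volume (fun p : 𝔼 × 𝔼 => h p * ⟪u p.1 - p.2, F p - R p.1⟫) _ :=
    HI.of (int ((pu.sub hW PB_snd).inner (pF.sub hW pR))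
      ((cu1.sub continuous_snd).inner (cF.sub cR1)))
  have petr : PB wt fun p : 𝔼 × 𝔼 => etr (fderiv ℝ u p.1) :=
    ((PB.const hW (d : ℝ)).norm_mul pdu).of_norm_le fun p => by
      have := abs_etr_le (fderiv ℝ u p.1)
      simpa using this
  have HS : HI volume (fun p : 𝔼 × 𝔼 => h p * (etr (fderiv ℝ u p.1)
      - ⟪p.2 - u p.1, fderiv ℝ u p.1 (p.2 - u p.1)⟫)) _ :=
    HI.of (int (petr.sub hW (pxu.inner (pdu.apply pxu)))
      ((continuous_etr.comp cdu1).sub (cxu.inner (cdu1.clm_apply cxu))))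
  have hzJ : ∀ p : 𝔼 × 𝔼, (h p)⁻¹ * ⟪gradient (fun ζ => h (p.1, ζ)) p.2 + h p • p.2,
      gradient (fun ζ => h (p.1, ζ)) p.2 + h p • (p.2 - u p.1)⟫ = h p * z p := by
    intro p
    have h0 := (hpos p).ne'
    have e1 := hJ p.1 p.2
    have e2 : gradient (fun ζ => h (p.1, ζ)) p.2 + h p • (p.2 - u p.1)
        = h p • (-n p + (p.2 - u p.1)) := by
      rw [gradh, smul_add, smul_neg, neg_smul]
    rw [e2]
    change (h p)⁻¹ * ⟪gradient (fun ζ => h (p.1, ζ)) p.2 + h p • p.2, _⟫ = _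
    change gradient (fun ζ => h (p.1, ζ)) p.2 + h p • p.2 = h p • (p.2 - n p) at e1
    rw [e1, inner_smul_left, inner_smul_right]
    simp only [conj_trivial, z]
    field_simp
  have HJ : HI volume (fun p : 𝔼 × 𝔼 => (h p)⁻¹ *
      ⟪gradient (fun ζ => h (p.1, ζ)) p.2 + h p • p.2,
      gradient (fun ζ => h (p.1, ζ)) p.2 + h p • (p.2 - u p.1)⟫) _ :=
    HI.of ((int pz cz).congr (Filter.Eventually.of_forall fun p => (hzJ p).symm))
  have cgr : Continuous fun p : 𝔼 × 𝔼 => gradient (fun ζ => h (p.1, ζ)) p.2 := by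
    simp_rw [gradh]
    exact hhc.neg.smul cn
  obtain ⟨PL1, PL2⟩ := prod_lemma hpos hhc (fun x => sl2 hh1 x) cgr u cu (fun x => fderiv ℝ u x)
    B τ L hB hτ hL (by simpa using int (PB.const hW 1) continuous_const)
    ((int PB_snd.sqnorm (by fun_prop)).congr (Filter.Eventually.of_forall fun p => mul_comm _ _))
    ((int pn.sqnorm (by fun_prop)).congr (Filter.Eventually.of_forall fun p => by
      have h0 := (hpos p).ne'
      simp only [gradh, norm_smul, norm_neg, mul_pow, Real.norm_of_nonneg (hpos p).le]
      field_simp))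
    (int pxu.sqnorm (cxu.norm.pow 2)) HJ.1 HS.1
    ((int ((PB.const hW 1).add hW PB_snd.sqnorm) (by fun_prop)).congr
      (Filter.Eventually.of_forall fun p => mul_comm _ _))
  -- main identity
  have main0 := ((((((D3.sub D2).sub (D1.cmul B)).sub HF).sub HR).add (HS.cmul B)).sub
      (HJ.cmul (1 / τ)))
  have main := main0.congr (Y := fun p : 𝔼 × 𝔼 => A * ((-φ p - r p.1 + c0
      + ‖p.2 - u p.1‖ ^ 2 / 2 + 1)
      * (κ p * h p) - h p * (rt p.1 + ⟪p.2 - u p.1, ut p.1⟫))) (fun p => by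
    rw [hzJ]
    change A * ((g p + 1) * (κ p * h p) - h p * (rt p.1 + ⟪p.2 - u p.1, ut p.1⟫)) = _
    have e1 : A * (h p * rt p.1) = h p * (-B * etr (fderiv ℝ u p.1)
      - B * fderiv ℝ r p.1 (u p.1)) := by rw [← hmass]; ring
    have e2 : A * (h p * ⟪p.2 - u p.1, ut p.1⟫) = h p * (⟪R p.1, p.2 - u p.1⟫
        - B * ⟪fderiv ℝ u p.1 (u p.1), p.2 - u p.1⟫ - B * fderiv ℝ r p.1 (p.2 - u p.1)) := by
      rw [← hmomt, real_inner_comm]; ring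
    have e3 : fderiv ℝ r p.1 (p.2 - u p.1) = b p - fderiv ℝ r p.1 (u p.1) := map_sub _ _ _
    have e4 : ⟪p.2 - u p.1, fderiv ℝ u p.1 (p.2 - u p.1)⟫
        = e p - ⟪fderiv ℝ u p.1 (u p.1), p.2 - u p.1⟫ := by
      rw [map_sub, inner_sub_right, real_inner_comm (p.2 - u p.1) (fderiv ℝ u p.1 (u p.1))]
    have e5 : ⟪u p.1 - p.2, F p - R p.1⟫ = ⟪R p.1, p.2 - u p.1⟫ - s p := by
      rw [← neg_sub p.2 (u p.1), inner_neg_left, inner_sub_right,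
        real_inner_comm (p.2 - u p.1) (R p.1)]
      ring
    rw [e4, e5, mul_sub, mul_add (h p), mul_add A, e1, e2, e3]
    change _ = h p * (1 / τ * z p + (g p + 1) * (A * κ p - B * ax p - q p + δ p)) -
            h p * (-q p * g p + (-q p + s p) + g p * δ p) -
          B * (h p * (-ax p * g p + (-ax p - b p - e p))) - δ p * h p - _ + _ - _
    ring) rfl
  have main2 := main.2
  rw [integral_const_mul, PL1] at main2
  have hA' := hA.ne'
  have hτ' := hτ.ne'
  rw [eq_div_of_mul_eq hA' ((mul_comm _ _).trans main2)]
  generalize (∫ p : 𝔼 × 𝔼, (h p)⁻¹ * ‖gradient (fun ζ => h (p.1, ζ)) p.2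
          + h p • (p.2 - (∫ ξ, h (p.1, ξ))⁻¹ • ∫ ξ, h (p.1, ξ) • ξ)‖ ^ 2) = ID at *
  generalize (∫ x : 𝔼, (∫ ξ, h (x, ξ)) * ⟪(∫ ξ, h (x, ξ))⁻¹ • ∫ ξ, h (x, ξ) • ξ,
            ((∫ ξ, h (x, ξ))⁻¹ • ∫ ξ, h (x, ξ) • ξ) - u x⟫) = IQ at *
  generalize (∫ x : 𝔼, (∫ ξ, h (x, ξ)) *
          ‖((∫ ξ, h (x, ξ))⁻¹ • ∫ ξ, h (x, ξ) • ξ) - u x‖ ^ 2) = IP at *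
  generalize (∫ p : 𝔼 × 𝔼, (1 + ‖p.2‖ ^ 2) * h p) = IM at *
  generalize (∫ p : 𝔼 × 𝔼, ediv (fun ζ => F (p.1, ζ)) p.2 * h p) = IF at *
  generalize (∫ p : 𝔼 × 𝔼, h p * ⟪u p.1 - p.2, F p - R p.1⟫) = IR at *
  generalize (∫ p : 𝔼 × 𝔼, h p * (etr (fderiv ℝ u p.1)
      - ⟪p.2 - u p.1, fderiv ℝ u p.1 (p.2 - u p.1)⟫)) = IS at *
  have := div_le_div_of_nonneg_right PL2 hA.le
  have e1 : (B * L * IP + 1 / (2 * τ) * ID + B ^ 2 * τ / 2 * L ^ 2 * IM) / A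
    = B / A * L * IP + 1 / (2 * τ * A) * ID + B ^ 2 * τ / (2 * A) * L ^ 2 * IM := by
    field_simp
  have e2 : (0 - 0 - B * 0 - IF - IR + B * IS - 1 / τ * (ID + IQ)) / A
    = B * IS / A - 1 / A * IF - 1 / A * IR - 2 * (1 / (2 * τ * A) * ID) - 1 / (A * τ) * IQ := by
    field_simp
    ring
  rw [e1] at this
  rw [e2]
  linarith

end RelEnt5

section RelEnt6
variable {d : ℕ}
local notation "𝔼" => EuclideanSpace ℝ (Fin d)

lemma continuous_wt : Continuous (wt (d := d)) := by
  unfold wt; fun_prop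

lemma domination {T : ℝ} (hT : 0 < T) {f f' : ℝ × 𝔼 × 𝔼 → ℝ}
    (hc : ContinuousOn f (Set.Icc 0 T ×ˢ Set.univ)) (hpos : ∀ z, 0 < f z)
    (hmom : ∀ N : ℕ, ∃ c : ℝ, ∀ t ∈ Set.Icc (0 : ℝ) T,
      Integrable (fun p : 𝔼 × 𝔼 => wt p ^ N * f (t, p)) ∧
      (∫ p : 𝔼 × 𝔼, wt p ^ N * f (t, p)) ≤ c)
    (hd : ∀ t ∈ Set.Ioo (0 : ℝ) T, ∀ p, HasDerivAt (fun s => f (s, p)) (f' (t, p)) t)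
    {c : ℝ} (hc0 : 0 ≤ c) {k : ℕ}
    (hb : ∀ t ∈ Set.Ioo (0 : ℝ) T, ∀ p, f' (t, p) ≤ c * wt p ^ k * f (t, p)) (N : ℕ) :
    ∃ G : 𝔼 × 𝔼 → ℝ, Integrable G ∧
      ∀ s ∈ Set.Ioo (0 : ℝ) T, ∀ p, wt p ^ N * f (s, p) ≤ G p := by
  have hw0 : ∀ p : 𝔼 × 𝔼, 0 < wt p := fun p => zero_lt_one.trans_le (one_le_wt p)
  have cw := continuous_wt (d := d)
  let cl : ℝ → ℝ := fun r => max 0 (min T r)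
  have hcl : ∀ r, cl r ∈ Set.Icc 0 T := fun r => ⟨le_max_left _ _, max_le hT.le (min_le_left _ _)⟩
  have hcl' : ∀ r ∈ Set.Icc 0 T, cl r = r := fun r hr => by
    simp only [cl]; rw [min_eq_right hr.2, max_eq_right hr.1]
  have ccl : Continuous cl := by fun_prop
  let H : ℝ × (𝔼 × 𝔼) → ℝ := fun z => c * wt z.2 ^ (N + k) * f (cl z.1, z.2)
  have cH : Continuous H := by
    have h1 : Continuous fun z : ℝ × (𝔼 × 𝔼) => f (cl z.1, z.2) :=
      hc.comp_continuous (by fun_prop) fun z => ⟨hcl z.1, Set.mem_univ _⟩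
    have h2 : Continuous fun z : ℝ × (𝔼 × 𝔼) => wt z.2 := cw.comp continuous_snd
    exact (continuous_const.mul (h2.pow _)).mul h1
  have H0 : ∀ z, 0 ≤ H z := fun z =>
    mul_nonneg (mul_nonneg hc0 (pow_nonneg (hw0 _).le _)) (hpos _).le
  have hcs : ∀ p, ContinuousOn (fun s => f (s, p)) (Set.Icc 0 T) := fun p =>
    hc.comp (by fun_prop) fun s hs => ⟨hs, Set.mem_univ _⟩
  have cHs : ∀ p, Continuous fun r => H (r, p) := fun p => cH.comp (by fun_prop)
  obtain ⟨C, hC⟩ := hmom (N + k)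
  have Hint : Integrable H ((volume.restrict (Set.Ioc 0 T)).prod (volume : Measure (𝔼 × 𝔼))) := by
    rw [integrable_prod_iff cH.aestronglyMeasurable]
    constructor
    · refine Filter.Eventually.of_forall fun r => ?_
      refine ((hC _ (hcl r)).1.const_mul c).congr (Filter.Eventually.of_forall fun p => ?_)
      simp only [H]; ring
    · refine Integrable.mono' (integrable_const (c * C))
        (cH.norm.aestronglyMeasurable.integral_prod_right') ?_
      refine Filter.Eventually.of_forall fun r => ?_
      rw [Real.norm_of_nonneg (integral_nonneg fun p => norm_nonneg _)]
      have : ∀ p, ‖H (r, p)‖ = c * (wt p ^ (N + k) * f (cl r, p)) := fun p => by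
        rw [Real.norm_of_nonneg (H0 _)]; simp only [H]; ring
      simp_rw [this]
      rw [integral_const_mul]
      exact mul_le_mul_of_nonneg_left (hC _ (hcl r)).2 hc0
  obtain ⟨_, hC0⟩ := hmom N
  refine ⟨fun p => wt p ^ N * f (0, p) + ∫ r in Set.Ioc 0 T, H (r, p),
    (hC0 0 ⟨le_rfl, hT.le⟩).1.add Hint.integral_prod_right, fun s hs p => ?_⟩
  have key : f (s, p) - f (0, p) ≤ ∫ r in (0 : ℝ)..s, c * wt p ^ k * f (cl r, p) := by
    have hcc : Continuous fun r => c * wt p ^ k * f (cl r, p) := by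
      exact continuous_const.mul ((hcs p).comp_continuous ccl hcl)
    refine intervalIntegral.sub_le_integral_of_hasDeriv_right_of_le hs.1.le
      ((hcs p).mono (Set.Icc_subset_Icc_right hs.2.le))
      (fun r hr => (hd r ⟨hr.1, hr.2.trans hs.2⟩ p).hasDerivWithinAt)
      (hcc.integrableOn_Icc) (fun r hr => ?_)
    rw [hcl' r ⟨hr.1.le, (hr.2.trans hs.2).le⟩]
    exact hb r ⟨hr.1, hr.2.trans hs.2⟩ p
  have e1 : wt p ^ N * ∫ r in (0 : ℝ)..s, c * wt p ^ k * f (cl r, p)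
      = ∫ r in Set.Ioc 0 s, H (r, p) := by
    rw [← intervalIntegral.integral_const_mul, intervalIntegral.integral_of_le hs.1.le]
    refine integral_congr_ae (Filter.Eventually.of_forall fun r => ?_)
    simp only [H]; ring
  have e2 : ∫ r in Set.Ioc 0 s, H (r, p) ≤ ∫ r in Set.Ioc 0 T, H (r, p) :=
    setIntegral_mono_set ((cHs p).integrableOn_Ioc)
      (Filter.Eventually.of_forall fun r => H0 _)
      (Set.Ioc_subset_Ioc_right hs.2.le).eventuallyLE
  have := mul_le_mul_of_nonneg_left key (pow_nonneg (hw0 p).le N)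
  rw [e1, mul_sub] at this
  change _ ≤ wt p ^ N * f (0, p) + _
  linarith

end RelEnt6

section RelEnt7

section slices
variable {X V : Type*} [NormedAddCommGroup X] [NormedSpace ℝ X] [NormedAddCommGroup V]
  [NormedSpace ℝ V] {U : ℝ × X → V} {K : Set ℝ} {t : ℝ} {n : WithTop ℕ∞}

lemma contDiffAt_slab (h : ContDiffOn ℝ n U (K ×ˢ Set.univ)) (hK : K ∈ nhds t) (x : X) :
    ContDiffAt ℝ n U (t, x) :=
  h.contDiffAt (prod_mem_nhds hK Filter.univ_mem)

lemma contDiff_slice (h : ContDiffOn ℝ n U (K ×ˢ Set.univ)) (hK : K ∈ nhds t) :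
    ContDiff ℝ n fun x => U (t, x) := by
  rw [contDiff_iff_contDiffAt]
  intro x
  exact (contDiffAt_slab h hK x).comp x (contDiffAt_const.prodMk contDiffAt_id)

lemma hasDerivAt_slice (h : ContDiffOn ℝ n U (K ×ˢ Set.univ)) (hn : n ≠ 0) (hK : K ∈ nhds t)
    (x : X) : HasDerivAt (fun s => U (s, x)) (fderiv ℝ U (t, x) (1, 0)) t := by
  have h1 := ((contDiffAt_slab h hK x).differentiableAt hn).hasFDerivAt
  have h2 : HasDerivAt (fun s : ℝ => (s, x)) ((1 : ℝ), (0 : X)) t :=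
    (hasDerivAt_id t).prodMk (hasDerivAt_const t x)
  exact h1.comp_hasDerivAt t h2

lemma hasFDerivAt_slice (h : ContDiffOn ℝ n U (K ×ˢ Set.univ)) (hn : n ≠ 0) (hK : K ∈ nhds t)
    (x : X) : HasFDerivAt (fun y => U (t, y))
      ((fderiv ℝ U (t, x)).comp (ContinuousLinearMap.inr ℝ ℝ X)) x := by
  have h1 := ((contDiffAt_slab h hK x).differentiableAt hn).hasFDerivAt
  exact h1.comp x (hasFDerivAt_prodMk_right t x)

lemma continuous_dt_slice (h : ContDiffOn ℝ n U (K ×ˢ Set.univ)) (hn : n ≠ 0) (hK : K ∈ nhds t) :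
    Continuous fun x => fderiv ℝ U (t, x) (1, 0) := by
  rw [continuous_iff_continuousAt]
  intro x
  have h1 : ContinuousAt (fderiv ℝ U) (t, x) :=
    ((contDiffAt_slab h hK x).of_le (ENat.one_le_iff_ne_zero_withTop.2 hn)).fderiv_right (m := 0)
      (by norm_num) |>.continuousAt
  have h2 : ContinuousAt (fun x => fderiv ℝ U (t, x)) x :=
    h1.comp (f := fun x => (t, x)) (by fun_prop)
  exact h2.clm_apply continuousAt_const

end slices

variable {d : ℕ}
local notation "𝔼" => EuclideanSpace ℝ (Fin d)

lemma log_div_maxwellian (a ρ : ℝ) (hρ : 0 < ρ) (u ξ : 𝔼) :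
    Real.log (Real.exp (-a) / maxwellian d ρ u ξ)
      = -a - Real.log ρ + (d : ℝ) / 2 * Real.log (2 * π) + ‖ξ - u‖ ^ 2 / 2 := by
  have h2 : (0 : ℝ) < 2 * π := by positivity
  unfold maxwellian
  have h3 : (2 * π) ^ (-(d : ℝ) / 2) ≠ 0 := (Real.rpow_pos_of_pos h2 _).ne'
  rw [Real.log_div (Real.exp_pos _).ne' (by positivity), Real.log_mul (by positivity)
    (Real.exp_pos _).ne', Real.log_mul hρ.ne' h3, Real.log_exp, Real.log_exp, Real.log_rpow h2]
  ring

lemma macro_eqs {ρ : ℝ → 𝔼 → ℝ} {u : ℝ → 𝔼 → 𝔼} {t A B : ℝ} {x : 𝔼} {R : 𝔼}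
    {ρ' : ℝ} {u' : 𝔼} {dρ : 𝔼 →L[ℝ] ℝ} {du : 𝔼 →L[ℝ] 𝔼}
    (h1 : HasDerivAt (fun s => ρ s x) ρ' t) (h2 : HasDerivAt (fun s => u s x) u' t)
    (h3 : HasFDerivAt (ρ t) dρ x) (h4 : HasFDerivAt (u t) du x) (hρ : 0 < ρ t x)
    (hmass : A * deriv (fun s => ρ s x) t + B * ediv (fun y => ρ t y • u t y) x = 0)
    (hmom : ∀ i : Fin d,
      A * deriv (fun s => ρ s x * u s x i) t
        + B * ediv (fun y => (ρ t y * u t y i) • u t y) x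
        + B * gradient (ρ t) x i
      = ρ t x * R i) :
    A * (ρ' / ρ t x) = -B * etr du - B * ((ρ t x)⁻¹ • dρ) (u t x) ∧
    ∀ a, A * ⟪u', a⟫ + B * ⟪du (u t x), a⟫ + B * ((ρ t x)⁻¹ • dρ) a = ⟪R, a⟫ := by
  have hne := hρ.ne'
  have m1 : A * ρ' + B * (dρ (u t x) + ρ t x * etr du) = 0 := by
    rw [h1.deriv, ediv_smul h3.differentiableAt h4.differentiableAt, h3.fderiv, ediv_eq_etr,
      h4.fderiv] at hmass
    exact hmass
  have comp : ∀ i : Fin d, A * u' i + B * du (u t x) i + B * (ρ t x)⁻¹ * gradient (ρ t) x i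
      = R i := by
    intro i
    have hm := hmom i
    have k1 : HasDerivAt (fun s => u s x i) (u' i) t :=
      (EuclideanSpace.proj (𝕜 := ℝ) i : 𝔼 →L[ℝ] ℝ).hasFDerivAt.comp_hasDerivAt t h2
    have k2 : HasFDerivAt (fun y => u t y i)
        ((EuclideanSpace.proj (𝕜 := ℝ) i : 𝔼 →L[ℝ] ℝ).comp du) x :=
      (EuclideanSpace.proj (𝕜 := ℝ) i : 𝔼 →L[ℝ] ℝ).hasFDerivAt.comp x h4
    have k3 := h3.fun_mul k2
    have k4 := h1.fun_mul k1
    rw [k4.deriv, ediv_smul k3.differentiableAt h4.differentiableAt, k3.fderiv, ediv_eq_etr,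
      h4.fderiv] at hm
    simp at hm
    field_simp
    linear_combination hm - u t x i * m1
  constructor
  · simp
    field_simp
    linear_combination m1
  · intro a
    have hv : A • u' + B • du (u t x) + (B * (ρ t x)⁻¹) • gradient (ρ t) x = R := by
      ext i
      simpa using comp i
    rw [← hv, inner_add_left, inner_add_left, inner_smul_left, inner_smul_left, inner_smul_left,
      inner_gradient_left, h3.fderiv]
    simp
    ring

/-- boundedness helper -/
lemma PB.of_bound {α V : Type*} [SeminormedAddCommGroup V] {W W' : α → ℝ} {h : α → V} (c : ℝ)
    (k : ℕ) (h0 : ∀ a, 0 ≤ W' a) (hW : ∀ a, W' a ≤ W a) (H : ∀ a, ‖h a‖ ≤ c * W' a ^ k) :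
    PB W h :=
  ⟨|c|, abs_nonneg _, k, fun a => (H a).trans ((mul_le_mul_of_nonneg_right (le_abs_self c)
    (pow_nonneg (h0 a) k)).trans (mul_le_mul_of_nonneg_left
      (pow_le_pow_left₀ (h0 a) (hW a) k) (abs_nonneg _)))⟩

lemma psi_growth {g : 𝔼 × 𝔼 → ℝ} (hg : Differentiable ℝ g) {c : ℝ} (hc : 0 ≤ c) {k : ℕ}
    (hb : ∀ p, ‖fderiv ℝ g p‖ ≤ c * wt p ^ k) (p : 𝔼 × 𝔼) :
    |g p| ≤ |g 0| + c * wt p ^ (k + 1) := by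
  have hw : ∀ q ∈ segment ℝ 0 p, wt q ≤ wt p := by
    rintro q ⟨a, b, ha, hb, hab, rfl⟩
    have hb1 : b ≤ 1 := by linarith
    simp only [wt, smul_zero, zero_add, Prod.smul_fst, Prod.smul_snd, norm_smul,
      Real.norm_of_nonneg hb]
    have := mul_le_of_le_one_left (norm_nonneg p.1) hb1
    have := mul_le_of_le_one_left (norm_nonneg p.2) hb1
    linarith
  have h1 := (convex_segment (𝕜 := ℝ) (0 : 𝔼 × 𝔼) p).norm_image_sub_le_of_norm_fderiv_le
    (f := g) (C := c * wt p ^ k) (fun q _ => hg q)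
    (fun q hq => (hb q).trans (mul_le_mul_of_nonneg_left
      (pow_le_pow_left₀ (zero_le_one.trans (one_le_wt q)) (hw q hq) k) hc))
    (left_mem_segment ℝ _ _) (right_mem_segment ℝ _ _)
  have h2 : ‖p - 0‖ ≤ wt p := by
    rw [sub_zero, Prod.norm_def, wt]
    exact max_le (by linarith [norm_nonneg p.2]) (by linarith [norm_nonneg p.1])
  have h3 : c * wt p ^ k * ‖p - 0‖ ≤ c * wt p ^ k * wt p :=
    mul_le_mul_of_nonneg_left h2 ((norm_nonneg _).trans (hb p))
  rw [Real.norm_eq_abs] at h1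
  have h4 := abs_sub_abs_le_abs_sub (g p) (g 0)
  have h5 : c * wt p ^ (k + 1) = c * wt p ^ k * wt p := by ring
  linarith

end RelEnt7

set_option maxHeartbeats 2000000 in
/-- Relative entropy inequality for the kinetic equation
`A ∂_t f + B ξ·∇_x f + ∇_ξ·(F f) = (1/τ) ∇_ξ·(∇_ξ f + ξ f)`
against the macroscopic system `A ∂_t ρ + B ∇·(ρ u) = 0`,
`A ∂_t(ρ u) + B ∇·(ρ u⊗u) + B ∇ρ = ρ R`, with a uniform bound `|∇u| ≤ L`. -/
theorem relative_entropy_inequality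
    (d : ℕ) (hd : 1 ≤ d) (T A B τ : ℝ) (hT : 0 < T) (hA : 0 < A) (hB : 0 < B) (hτ : 0 < τ)
    (ψ f : ℝ × EuclideanSpace ℝ (Fin d) × EuclideanSpace ℝ (Fin d) → ℝ)
    (hf : f = fun p => Real.exp (-ψ p))
    (hψ : ContDiffOn ℝ (⊤ : ℕ∞) ψ (Set.Icc 0 T ×ˢ
      (Set.univ : Set (EuclideanSpace ℝ (Fin d) × EuclideanSpace ℝ (Fin d)))))
    (hψbound : ∀ n : ℕ, 1 ≤ n → ∃ c : ℝ, ∃ k : ℕ,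
      ∀ t ∈ Set.Icc (0 : ℝ) T, ∀ x ξ : EuclideanSpace ℝ (Fin d),
        ‖iteratedFDerivWithin ℝ n ψ
            (Set.Icc 0 T ×ˢ
              (Set.univ : Set (EuclideanSpace ℝ (Fin d) × EuclideanSpace ℝ (Fin d))))
            (t, x, ξ)‖ ≤ c * (1 + ‖x‖ + ‖ξ‖) ^ k)
    (hfmom : ∀ N : ℕ, ∃ c : ℝ, ∀ t ∈ Set.Icc (0 : ℝ) T,
      Integrable (fun p : EuclideanSpace ℝ (Fin d) × EuclideanSpace ℝ (Fin d) =>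
        (1 + ‖p.1‖ + ‖p.2‖) ^ N * f (t, p.1, p.2)) ∧
      (∫ p : EuclideanSpace ℝ (Fin d) × EuclideanSpace ℝ (Fin d),
        (1 + ‖p.1‖ + ‖p.2‖) ^ N * f (t, p.1, p.2)) ≤ c)
    (F : ℝ × EuclideanSpace ℝ (Fin d) × EuclideanSpace ℝ (Fin d) → EuclideanSpace ℝ (Fin d))
    (hF : ContDiffOn ℝ 1 F (Set.Icc 0 T ×ˢ
      (Set.univ : Set (EuclideanSpace ℝ (Fin d) × EuclideanSpace ℝ (Fin d)))))
    (hFbound : ∃ c : ℝ, ∃ k : ℕ, ∀ t ∈ Set.Icc (0 : ℝ) T, ∀ x ξ : EuclideanSpace ℝ (Fin d),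
      ‖F (t, x, ξ)‖ ≤ c * (1 + ‖x‖ + ‖ξ‖) ^ k ∧
      |ediv (fun ζ => F (t, x, ζ)) ξ| ≤ c * (1 + ‖x‖ + ‖ξ‖) ^ k)
    (hkin : ∀ t ∈ Set.Ioo (0 : ℝ) T, ∀ x ξ : EuclideanSpace ℝ (Fin d),
      A * deriv (fun s => f (s, x, ξ)) t
        + B * ⟪ξ, gradient (fun y => f (t, y, ξ)) x⟫
        + ediv (fun ζ => f (t, x, ζ) • F (t, x, ζ)) ξ
      = (1 / τ) * ediv (fun ζ => gradient (fun ζ' => f (t, x, ζ')) ζ + f (t, x, ζ) • ζ) ξ)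
    (ρ : ℝ → EuclideanSpace ℝ (Fin d) → ℝ)
    (u R : ℝ → EuclideanSpace ℝ (Fin d) → EuclideanSpace ℝ (Fin d))
    (hρC1 : ContDiffOn ℝ 1 (fun p : ℝ × EuclideanSpace ℝ (Fin d) => ρ p.1 p.2)
      (Set.Ioo 0 T ×ˢ (Set.univ : Set (EuclideanSpace ℝ (Fin d)))))
    (huC1 : ContDiffOn ℝ 1 (fun p : ℝ × EuclideanSpace ℝ (Fin d) => u p.1 p.2)
      (Set.Ioo 0 T ×ˢ (Set.univ : Set (EuclideanSpace ℝ (Fin d)))))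
    (hRC1 : ContDiffOn ℝ 1 (fun p : ℝ × EuclideanSpace ℝ (Fin d) => R p.1 p.2)
      (Set.Ioo 0 T ×ˢ (Set.univ : Set (EuclideanSpace ℝ (Fin d)))))
    (hρpos : ∀ t ∈ Set.Ioo (0 : ℝ) T, ∀ x, 0 < ρ t x)
    (hmacrobound : ∃ c : ℝ, ∃ k : ℕ, ∀ t ∈ Set.Ioo (0 : ℝ) T, ∀ x : EuclideanSpace ℝ (Fin d),
      |Real.log (ρ t x)| ≤ c * (1 + ‖x‖) ^ k ∧
      ‖gradient (fun y => Real.log (ρ t y)) x‖ ≤ c * (1 + ‖x‖) ^ k ∧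
      ‖u t x‖ ≤ c * (1 + ‖x‖) ^ k ∧
      ‖fderiv ℝ (u t) x‖ ≤ c * (1 + ‖x‖) ^ k ∧
      ‖deriv (fun s => u s x) t‖ ≤ c * (1 + ‖x‖) ^ k ∧
      ‖R t x‖ ≤ c * (1 + ‖x‖) ^ k)
    (hmass : ∀ t ∈ Set.Ioo (0 : ℝ) T, ∀ x : EuclideanSpace ℝ (Fin d),
      A * deriv (fun s => ρ s x) t + B * ediv (fun y => ρ t y • u t y) x = 0)
    (hmom : ∀ t ∈ Set.Ioo (0 : ℝ) T, ∀ x : EuclideanSpace ℝ (Fin d), ∀ i : Fin d,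
      A * deriv (fun s => ρ s x * u s x i) t
        + B * ediv (fun y => (ρ t y * u t y i) • u t y) x
        + B * gradient (ρ t) x i
      = ρ t x * R t x i)
    (L : ℝ)
    (hL : ∀ t ∈ Set.Ioo (0 : ℝ) T, ∀ x : EuclideanSpace ℝ (Fin d), ‖fderiv ℝ (u t) x‖ ≤ L) :
    ∀ t ∈ Set.Ioo (0 : ℝ) T,
      deriv
          (fun s => ∫ p : EuclideanSpace ℝ (Fin d) × EuclideanSpace ℝ (Fin d),
            f (s, p.1, p.2) *
              Real.log (f (s, p.1, p.2) / maxwellian d (ρ s p.1) (u s p.1) p.2)) t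
        + (1 / (2 * τ * A)) * (∫ p : EuclideanSpace ℝ (Fin d) × EuclideanSpace ℝ (Fin d),
            (f (t, p.1, p.2))⁻¹ *
              ‖gradient (fun ζ => f (t, p.1, ζ)) p.2
                + f (t, p.1, p.2) •
                  (p.2 - (∫ ξ, f (t, p.1, ξ))⁻¹ • ∫ ξ, f (t, p.1, ξ) • ξ)‖ ^ 2)
      ≤ (B / A) * L * (∫ x : EuclideanSpace ℝ (Fin d),
            (∫ ξ, f (t, x, ξ)) *
              ‖((∫ ξ, f (t, x, ξ))⁻¹ • ∫ ξ, f (t, x, ξ) • ξ) - u t x‖ ^ 2)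
        + (B ^ 2 * τ / (2 * A)) * L ^ 2 *
            (∫ p : EuclideanSpace ℝ (Fin d) × EuclideanSpace ℝ (Fin d),
              (1 + ‖p.2‖ ^ 2) * f (t, p.1, p.2))
        - (1 / (A * τ)) * (∫ x : EuclideanSpace ℝ (Fin d),
            (∫ ξ, f (t, x, ξ)) *
              ⟪(∫ ξ, f (t, x, ξ))⁻¹ • ∫ ξ, f (t, x, ξ) • ξ,
                ((∫ ξ, f (t, x, ξ))⁻¹ • ∫ ξ, f (t, x, ξ) • ξ) - u t x⟫)
        - (1 / A) * (∫ p : EuclideanSpace ℝ (Fin d) × EuclideanSpace ℝ (Fin d),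
            ediv (fun ζ => F (t, p.1, ζ)) p.2 * f (t, p.1, p.2))
        - (1 / A) * (∫ p : EuclideanSpace ℝ (Fin d) × EuclideanSpace ℝ (Fin d),
            f (t, p.1, p.2) * ⟪u t p.1 - p.2, F (t, p.1, p.2) - R t p.1⟫) := by
  intro t ht
  let E := EuclideanSpace ℝ (Fin d)
  have nI : ∀ {s : ℝ}, s ∈ Set.Ioo (0 : ℝ) T → Set.Icc (0 : ℝ) T ∈ nhds s :=
    fun hs => Icc_mem_nhds hs.1 hs.2
  have nO : ∀ {s : ℝ}, s ∈ Set.Ioo (0 : ℝ) T → Set.Ioo (0 : ℝ) T ∈ nhds s :=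
    fun hs => Ioo_mem_nhds hs.1 hs.2
  have hinf : ((⊤ : ℕ∞) : WithTop ℕ∞) ≠ 0 := by simp
  have hfe : ∀ z, f z = Real.exp (-ψ z) := fun z => by rw [hf]
  have hpos : ∀ z, 0 < f z := fun z => by rw [hfe]; exact Real.exp_pos _
  -- uniform bounds, indexed by time and phase space
  let W : (Set.Ioo (0 : ℝ) T) × (E × E) → ℝ := fun a => wt a.2
  have hW : ∀ a, 1 ≤ W a := fun a => one_le_wt a.2
  have hW1 : ∀ a : (Set.Ioo (0 : ℝ) T) × (E × E), 1 + ‖a.2.1‖ ≤ W a := fun a => by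
    change 1 + ‖a.2.1‖ ≤ 1 + ‖a.2.1‖ + ‖a.2.2‖
    linarith [norm_nonneg a.2.2]
  have hW0 : ∀ a : (Set.Ioo (0 : ℝ) T) × (E × E), 0 ≤ 1 + ‖a.2.1‖ := fun a => by positivity
  have hWn : ∀ a, 0 ≤ W a := fun a => zero_le_one.trans (hW a)
  have Pdψ : PB W fun a => fderiv ℝ ψ (a.1, a.2) := by
    obtain ⟨c, k, hck⟩ := hψbound 1 le_rfl
    refine PB.of_bound c k hWn (fun a => le_rfl) fun a => ?_
    have h1 := hck a.1 ⟨a.1.2.1.le, a.1.2.2.le⟩ a.2.1 a.2.2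
    have hmem : (Set.Icc 0 T ×ˢ (Set.univ : Set (E × E))) ∈ nhds ((a.1 : ℝ), a.2.1, a.2.2) :=
      prod_mem_nhds (nI a.1.2) Filter.univ_mem
    rw [norm_iteratedFDerivWithin_one _ (uniqueDiffWithinAt_of_mem_nhds hmem),
      fderivWithin_of_mem_nhds hmem] at h1
    exact h1
  obtain ⟨c1, hc1, k1, hck1⟩ := Pdψ
  have Pdψ : PB W fun a => fderiv ℝ ψ (a.1, a.2) := ⟨c1, hc1, k1, hck1⟩
  have slψ : ∀ s ∈ Set.Ioo (0 : ℝ) T, ∀ p : E × E, HasFDerivAt (fun q => ψ (s, q))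
      ((fderiv ℝ ψ (s, p)).comp (ContinuousLinearMap.inr ℝ ℝ (E × E))) p :=
    fun s hs p => hasFDerivAt_slice hψ hinf (nI hs) p
  have bslψ : ∀ s (hs : s ∈ Set.Ioo (0 : ℝ) T) (p : E × E),
      ‖fderiv ℝ (fun q => ψ (s, q)) p‖ ≤ ‖fderiv ℝ ψ (s, p)‖ := by
    intro s hs p
    rw [(slψ s hs p).fderiv]
    refine (ContinuousLinearMap.opNorm_comp_le _ _).trans ?_
    exact mul_le_of_le_one_right (norm_nonneg _) (ContinuousLinearMap.norm_inr_le_one ..)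
  have Pψ : PB W fun a => ψ (a.1, a.2) := by
    have hcomp : ContinuousOn (fun s : ℝ => ψ (s, (0 : E × E))) (Set.Icc 0 T) :=
      hψ.continuousOn.comp (by fun_prop) fun s hs => ⟨hs, Set.mem_univ _⟩
    obtain ⟨M, hM⟩ := isCompact_Icc.exists_bound_of_continuousOn hcomp
    have P1 : PB W fun a => M := PB.const hW M
    have P2 : PB W fun a => c1 * W a ^ (k1 + 1) :=
      PB.of_bound c1 (k1 + 1) hWn (fun a => le_rfl) fun a => by
        rw [Real.norm_of_nonneg (mul_nonneg hc1 (pow_nonneg (hWn a) _))]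
    refine (P1.add hW P2).of_norm_le fun a => ?_
    have h1 := psi_growth (g := fun q => ψ (a.1, q))
      (fun q => (slψ a.1 a.1.2 q).differentiableAt) hc1
      (fun q => (bslψ a.1 a.1.2 q).trans (hck1 (a.1, q))) a.2
    have h2 := hM a.1 ⟨a.1.2.1.le, a.1.2.2.le⟩
    rw [Real.norm_eq_abs] at h2
    refine le_trans ?_ (le_abs_self _)
    exact h1.trans (add_le_add h2 le_rfl)
  obtain ⟨c2, k2, hck2⟩ := hFbound
  have PF : PB W fun a => F (a.1, a.2) :=
    PB.of_bound c2 k2 hWn (fun a => le_rfl) fun a =>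
      (hck2 a.1 ⟨a.1.2.1.le, a.1.2.2.le⟩ a.2.1 a.2.2).1
  have Pδ : PB W fun a => ediv (fun ζ => F (a.1, a.2.1, ζ)) a.2.2 :=
    PB.of_bound c2 k2 hWn (fun a => le_rfl) fun a =>
      (hck2 a.1 ⟨a.1.2.1.le, a.1.2.2.le⟩ a.2.1 a.2.2).2
  obtain ⟨c3, k3, hck3⟩ := hmacrobound
  have Pr : PB W fun a => Real.log (ρ a.1 a.2.1) :=
    PB.of_bound c3 k3 hW0 hW1 fun a => (hck3 a.1 a.1.2 a.2.1).1
  have Pdr : PB W fun a => fderiv ℝ (fun y => Real.log (ρ a.1 y)) a.2.1 :=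
    PB.of_bound c3 k3 hW0 hW1 fun a => by
      have := (hck3 a.1 a.1.2 a.2.1).2.1
      unfold gradient at this
      rwa [LinearIsometryEquiv.norm_map] at this
  have Pu : PB W fun a => u a.1 a.2.1 :=
    PB.of_bound c3 k3 hW0 hW1 fun a => (hck3 a.1 a.1.2 a.2.1).2.2.1
  have Pdu : PB W fun a => fderiv ℝ (u a.1) a.2.1 :=
    PB.of_bound c3 k3 hW0 hW1 fun a => (hck3 a.1 a.1.2 a.2.1).2.2.2.1
  have Put : PB W fun a => deriv (fun s => u s a.2.1) a.1 :=
    PB.of_bound c3 k3 hW0 hW1 fun a => (hck3 a.1 a.1.2 a.2.1).2.2.2.2.1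
  have PR : PB W fun a => R a.1 a.2.1 :=
    PB.of_bound c3 k3 hW0 hW1 fun a => (hck3 a.1 a.1.2 a.2.1).2.2.2.2.2
  have Pξ : PB W fun a => a.2.2 :=
    (PB_snd (d := d)).comp (fun a : (Set.Ioo (0 : ℝ) T) × (E × E) => a.2) fun a => rfl
  -- regularity of the logarithm of the density
  have hrC1 : ContDiffOn ℝ 1 (fun p : ℝ × E => Real.log (ρ p.1 p.2))
      (Set.Ioo 0 T ×ˢ (Set.univ : Set E)) :=
    hρC1.log fun p hp => ne_of_gt (hρpos p.1 hp.1 p.2)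
  -- macroscopic equations
  have hmac : ∀ s ∈ Set.Ioo (0 : ℝ) T, ∀ x,
      A * deriv (fun s => Real.log (ρ s x)) s = -B * etr (fderiv ℝ (u s) x)
        - B * fderiv ℝ (fun y => Real.log (ρ s y)) x (u s x) ∧
      ∀ a, A * ⟪deriv (fun s => u s x) s, a⟫ + B * ⟪fderiv ℝ (u s) x (u s x), a⟫
        + B * fderiv ℝ (fun y => Real.log (ρ s y)) x a = ⟪R s x, a⟫ := by
    intro s hs x
    have h1 := hasDerivAt_slice hρC1 one_ne_zero (nO hs) x
    have h2 := hasDerivAt_slice huC1 one_ne_zero (nO hs) x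
    have h3 := hasFDerivAt_slice hρC1 one_ne_zero (nO hs) x
    have h4 := hasFDerivAt_slice huC1 one_ne_zero (nO hs) x
    have hp := hρpos s hs x
    have := macro_eqs (ρ := ρ) (u := u) h1 h2 h3 h4 hp (hmass s hs x) (hmom s hs x)
    have e1 := (h1.log hp.ne').deriv
    have e2 := h2.deriv
    have e3 := (h3.log hp.ne').fderiv
    have e4 := h4.fderiv
    simp only at e1 e2 e3 e4
    rw [e1, e2, e3]
    change fderiv ℝ (u s) x = _ at e4
    rw [e4]
    exact this
  have Prt : PB W fun a => deriv (fun s => Real.log (ρ s a.2.1)) a.1 := by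
    have petr : PB W fun a => etr (fderiv ℝ (u a.1) a.2.1) :=
      ((PB.const hW (d : ℝ)).norm_mul Pdu).of_norm_le fun p => by
        have := abs_etr_le (fderiv ℝ (u p.1) p.2.1)
        simpa using this
    have := (PB.const hW A⁻¹).mul (((PB.const hW (-B)).mul petr).sub hW
      ((PB.const hW B).mul (Pdr.apply Pu)))
    refine this.of_norm_le fun a => le_of_eq ?_
    rw [← (hmac a.1 a.1.2 a.2.1).1]
    congr 1
    field_simp
  -- time derivative of `f`
  let κ : ℝ × E × E → ℝ := fun z => -(fderiv ℝ ψ z (1, 0))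
  have hfd : ∀ s ∈ Set.Ioo (0 : ℝ) T, ∀ p : E × E,
      HasDerivAt (fun s => f (s, p)) (κ (s, p) * f (s, p)) s := by
    intro s hs p
    have h1 := (hasDerivAt_slice hψ hinf (nI hs) p).fun_neg.exp
    simp only [hfe]
    refine h1.congr_deriv ?_
    simp only [κ]; ring
  have Pκ : PB W fun a => κ (a.1, a.2) :=
    (Pdψ.apply (PB.const hW ((1 : ℝ), (0 : E × E)))).neg
  have Pxu : PB W fun a => a.2.2 - u a.1 a.2.1 := Pξ.sub hW Pu
  have hfc : ContinuousOn f (Set.Icc 0 T ×ˢ (Set.univ : Set (E × E))) := by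
    rw [hf]; exact hψ.continuousOn.neg.rexp
  have dom : ∀ N : ℕ, ∃ G : E × E → ℝ, Integrable G ∧
      ∀ s ∈ Set.Ioo (0 : ℝ) T, ∀ p, wt p ^ N * f (s, p) ≤ G p := by
    obtain ⟨c, hc, k, hk⟩ := Pκ
    exact domination hT (f' := fun z => κ z * f z) hfc hpos hfmom hfd hc (k := k)
      (fun s hs p => mul_le_mul_of_nonneg_right ((le_abs_self _).trans (hk (⟨s, hs⟩, p)))
        (hpos _).le)
  -- the logarithm
  let c0 : ℝ := (d : ℝ) / 2 * Real.log (2 * π)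
  let g : ℝ → E × E → ℝ := fun s p =>
    -ψ (s, p) - Real.log (ρ s p.1) + c0 + ‖p.2 - u s p.1‖ ^ 2 / 2
  have Pg : PB W fun a => g a.1 a.2 := by
    have := ((Pψ.neg.sub hW Pr).add hW (PB.const hW c0)).add hW
      (Pxu.sqnorm.mul (PB.const hW (1/2 : ℝ)))
    refine this.of_norm_le fun p => le_of_eq ?_
    simp only [g]; congr 1; ring
  let D : ℝ → E × E → ℝ := fun s p => (g s p + 1) * (κ (s, p) * f (s, p))
    - f (s, p) * (deriv (fun s => Real.log (ρ s p.1)) s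
      + ⟪p.2 - u s p.1, deriv (fun s => u s p.1) s⟫)
  have hgd : ∀ s ∈ Set.Ioo (0 : ℝ) T, ∀ p : E × E,
      HasDerivAt (fun s => f (s, p) * g s p) (D s p) s := by
    intro s hs p
    have h1 := (hasDerivAt_slice hψ hinf (nI hs) p).fun_neg
    have h2 := (hasDerivAt_slice hrC1 one_ne_zero (nO hs) p.1)
    have h3 := (hasDerivAt_slice huC1 one_ne_zero (nO hs) p.1)
    have h4 := ((h3.const_sub p.2).norm_sq).div_const 2
    have h5 : HasDerivAt (fun s => g s p) _ s := ((h1.fun_sub h2).add_const c0).fun_add h4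
    have h6 := (hfd s hs p).fun_mul h5
    refine h6.congr_deriv ?_
    have e2 := h2.deriv
    have e3 := h3.deriv
    simp only at e2 e3
    simp only [D, e2, e3, inner_neg_right, κ]
    ring
  have Dfac : ∀ s p, D s p = f (s, p) * ((g s p + 1) * κ (s, p)
      - (deriv (fun s => Real.log (ρ s p.1)) s
      + ⟪p.2 - u s p.1, deriv (fun s => u s p.1) s⟫)) := by
    intro s p; simp only [D]; ring
  have PD := ((Pg.add hW (PB.const hW (1 : ℝ))).mul Pκ).sub hW (Prt.add hW (Pxu.inner Put))
  -- continuity in phase space at fixed time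
  have cψs : ∀ s ∈ Set.Ioo (0 : ℝ) T, Continuous fun p : E × E => ψ (s, p) := fun s hs =>
    (contDiff_slice hψ (nI hs)).continuous
  have cfs : ∀ s ∈ Set.Ioo (0 : ℝ) T, Continuous fun p : E × E => f (s, p) := fun s hs => by
    simp only [hfe]; exact (cψs s hs).neg.rexp
  have hrs : ∀ s ∈ Set.Ioo (0 : ℝ) T, ContDiff ℝ 1 fun y => Real.log (ρ s y) := fun s hs =>
    contDiff_slice hrC1 (nO hs)
  have hus : ∀ s ∈ Set.Ioo (0 : ℝ) T, ContDiff ℝ 1 (u s) := fun s hs =>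
    contDiff_slice huC1 (nO hs)
  have cgs : ∀ s ∈ Set.Ioo (0 : ℝ) T, Continuous (g s) := fun s hs => by
    have h1 := cψs s hs
    have h2 : Continuous fun p : E × E => Real.log (ρ s p.1) :=
      (hrs s hs).continuous.comp continuous_fst
    have h3 : Continuous fun p : E × E => u s p.1 := (hus s hs).continuous.comp continuous_fst
    exact ((h1.neg.sub h2).add continuous_const).add
      (((continuous_snd.sub h3).norm.pow 2).div_const 2)
  have cκ : Continuous fun p : E × E => κ (t, p) :=
    (continuous_dt_slice hψ hinf (nI ht)).neg
  have cut : Continuous fun x => deriv (fun s => u s x) t := by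
    have h1 := continuous_dt_slice huC1 one_ne_zero (nO ht)
    refine h1.congr fun x => ?_
    exact (hasDerivAt_slice huC1 one_ne_zero (nO ht) x).deriv.symm
  have crt : Continuous fun x => deriv (fun s => Real.log (ρ s x)) t := by
    have h1 := continuous_dt_slice hrC1 one_ne_zero (nO ht)
    refine h1.congr fun x => ?_
    exact (hasDerivAt_slice hrC1 one_ne_zero (nO ht) x).deriv.symm
  have cD : Continuous (D t) := by
    have h1 := cgs t ht
    have h2 := cfs t ht
    have h3 : Continuous fun p : E × E => u t p.1 := (hus t ht).continuous.comp continuous_fst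
    have h4 : Continuous fun p : E × E => deriv (fun s => u s p.1) t := cut.comp continuous_fst
    have h5 : Continuous fun p : E × E => deriv (fun s => Real.log (ρ s p.1)) t :=
      crt.comp continuous_fst
    exact ((h1.add continuous_const).mul (cκ.mul h2)).sub
      (h2.mul (h5.add ((continuous_snd.sub h3).inner h4)))
  have hmomt : ∀ N : ℕ, Integrable fun p : E × E => wt p ^ N * f (t, p) := fun N => by
    obtain ⟨c, hc⟩ := hfmom N
    exact (hc t ⟨ht.1.le, ht.2.le⟩).1
  -- restriction of bounds to time `t`
  let ι : E × E → (Set.Ioo (0 : ℝ) T) × (E × E) := fun p => (⟨t, ht⟩, p)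
  have hι : ∀ p, W (ι p) = wt p := fun p => rfl
  -- differentiation under the integral sign
  have hder : HasDerivAt (fun s => ∫ p : E × E, f (s, p.1, p.2) *
      Real.log (f (s, p.1, p.2) / maxwellian d (ρ s p.1) (u s p.1) p.2)) (∫ p, D t p) t := by
    obtain ⟨c, hc, k, hk⟩ := PD
    obtain ⟨G, hG, hGb⟩ := dom k
    have h1 := (hasDerivAt_integral_of_dominated_loc_of_deriv_le (μ := (volume : Measure (E × E)))
      (F := fun s p => f (s, p) * g s p) (F' := D) (bound := fun p => c * G p) (nO ht)
      (Filter.eventually_of_mem (nO ht) fun s hs =>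
        ((cfs s hs).mul (cgs s hs)).aestronglyMeasurable)
      (integrable_PB (fun p => hpos (t, p)) (cfs t ht) hmomt (Pg.comp ι hι)
        (cgs t ht).aestronglyMeasurable)
      cD.aestronglyMeasurable
      (Filter.Eventually.of_forall fun p s hs => by
        rw [Dfac, norm_mul, Real.norm_of_nonneg (hpos _).le]
        calc _ ≤ f (s, p) * (c * wt p ^ k) :=
              mul_le_mul_of_nonneg_left (hk (⟨s, hs⟩, p)) (hpos _).le
          _ = c * (wt p ^ k * f (s, p)) := by ring
          _ ≤ c * G p := mul_le_mul_of_nonneg_left (hGb s hs p) hc)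
      (hG.const_mul c)
      (Filter.Eventually.of_forall fun p s hs => hgd s hs p)).2
    refine h1.congr_of_eventuallyEq (Filter.eventually_of_mem (nO ht) fun s hs => ?_)
    refine integral_congr_ae (Filter.Eventually.of_forall fun p => ?_)
    change f (s, p) * Real.log (f (s, p) / maxwellian d (ρ s p.1) (u s p.1) p.2) = f (s, p) * g s p
    congr 1
    rw [hfe]
    exact log_div_maxwellian _ _ (hρpos s hs p.1) _ _
  rw [hder.deriv]
  exact fixed_time (φ := fun p => ψ (t, p)) (h := fun p => f (t, p))
    ((contDiff_slice hψ (nI ht)).of_le (WithTop.coe_le_coe.2 (le_top : (2 : ℕ∞) ≤ ⊤))) (by funext p; rw [hfe])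
    hmomt (F := fun p => F (t, p)) (contDiff_slice hF (nI ht))
    (r := fun y => Real.log (ρ t y)) (hrs t ht) (hus t ht)
    (R := R t) (contDiff_slice hRC1 (nO ht)).continuous (κ := fun p => κ (t, p)) cκ
    (fun x => deriv (fun s => Real.log (ρ s x)) t) (fun x => deriv (fun s => u s x) t) c0
    (Pψ.comp ι hι) ((Pdψ.comp ι hι).of_norm_le fun p => bslψ t ht p) (PF.comp ι hι) (Pδ.comp ι hι)
    (Pr.comp ι hι) (Pdr.comp ι hι) (Pu.comp ι hι) (Pdu.comp ι hι) (PR.comp ι hι) (Pκ.comp ι hι)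
    A B τ L hA hB hτ
    (fun p => by
      have := hkin t ht p.1 p.2
      have e := (hfd t ht p).deriv
      change deriv (fun s => f (s, p.1, p.2)) t = _ at e
      rw [e] at this
      exact this)
    (fun x => (hmac t ht x).1) (fun x => (hmac t ht x).2) (hL t ht)
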